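/- Let s₀ > d be an integer, m₁,m₂ ∈ ℝ, a ∈ 𝒩^{m₁}_{s₀+4} and b ∈ 𝒩^{m₂}_{s₀+4}. Then T_a ∘ T_b = T_{ab} + (1/(2i)) T_{{a,b}} − (1/8) T_{σ(a,b)} + R(a,b), where the remainder satisfies, for any s ∈ ℝ and h ∈ H^s(𝕋^d;ℂ): ‖R(a,b)h‖_{H^{s−m₁−m₂+3}} ≤ C |a|_{𝒩^{m₁}_{s₀+4}} |b|_{𝒩^{m₂}_{s₀+4}} ‖h‖_{H^s}. -/

import Mathlib

open MeasureTheory Complex Real Filter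

noncomputable section

namespace QLNLS

/-- Points of `ℝ^d` (resp. the torus `𝕋^d = (ℝ/2πℤ)^d`, via `2π`-periodic functions). -/
abbrev Vec (d : ℕ) := Fin d → ℝ
/-- Frequency lattice `ℤ^d`. -/
abbrev Zd (d : ℕ) := Fin d → ℤ
/-- Functions on the torus. -/
abbrev Fn (d : ℕ) := Vec d → ℂ
/-- Sequences of Fourier coefficients. -/
abbrev Seq (d : ℕ) := Zd d → ℂ
/-- Symbols `a(x, ξ)`. -/
abbrev Sym (d : ℕ) := Vec d → Vec d → ℂ

variable {d : ℕ}

/-- Euclidean norm `|ξ|`. -/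
def rnorm (ξ : Vec d) : ℝ := Real.sqrt (∑ i, (ξ i) ^ 2)

/-- Euclidean norm `|n|` of a lattice point. -/
def znorm (n : Zd d) : ℝ := Real.sqrt (∑ i, ((n i : ℝ)) ^ 2)

/-- Japanese bracket `⟨n⟩ = (1+|n|²)^{1/2}`. -/
def jb (n : Zd d) : ℝ := Real.sqrt (1 + ∑ i, ((n i : ℝ)) ^ 2)

/-- Japanese bracket `⟨ξ⟩` for real frequencies. -/
def jbR (ξ : Vec d) : ℝ := Real.sqrt (1 + ∑ i, (ξ i) ^ 2)

/-- `2π`-periodicity in every coordinate. -/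
def Periodic2pi (u : Fn d) : Prop :=
  ∀ (x : Vec d) (n : Zd d), u (fun i => x i + 2 * π * (n i : ℝ)) = u x

/-- A fundamental domain of the torus. -/
def box (d : ℕ) : Set (Vec d) := Set.univ.pi fun _ : Fin d => Set.Ioc (0 : ℝ) (2 * π)

/-- Fourier coefficient `û(n) = (2π)^{-d/2} ∫ u(x) e^{-i n·x} dx`. -/
def fCoeff (u : Fn d) (n : Zd d) : ℂ :=
  (((2 * π : ℝ) ^ (-(d : ℝ) / 2) : ℝ) : ℂ) *
    ∫ x in box d, u x * Complex.exp (-Complex.I * ((∑ i, (n i : ℝ) * x i : ℝ) : ℂ))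

/-- Squared Sobolev norm of a coefficient sequence. -/
def hsNormSq (s : ℝ) (c : Seq d) : ℝ := ∑' n : Zd d, jb n ^ (2 * s) * ‖c n‖ ^ 2

/-- Sobolev norm of a coefficient sequence. -/
def hsNorm (s : ℝ) (c : Seq d) : ℝ := Real.sqrt (hsNormSq s c)

/-- Membership of a coefficient sequence in `H^s`. -/
def InHsSeq (s : ℝ) (c : Seq d) : Prop :=
  Summable fun n : Zd d => jb n ^ (2 * s) * ‖c n‖ ^ 2

/-- `H^s` norm of a function on the torus. -/
def sobNorm (s : ℝ) (u : Fn d) : ℝ := hsNorm s (fCoeff u)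

/-- `u ∈ H^s(𝕋^d;ℂ)`: `u` is `2π`-periodic, its Fourier coefficients are `H^s`-summable,
and `u` is represented by its Fourier series. -/
def InHs (s : ℝ) (u : Fn d) : Prop :=
  Periodic2pi u ∧ InHsSeq s (fCoeff u) ∧
    ∀ x : Vec d, HasSum
      (fun n : Zd d => (((2 * π : ℝ) ^ (-(d : ℝ) / 2) : ℝ) : ℂ) * fCoeff u n *
        Complex.exp (Complex.I * ((∑ i, (n i : ℝ) * x i : ℝ) : ℂ))) (u x)

/-- Partial derivative `∂_{x_i}` of a function. -/
def pdF (i : Fin d) (u : Fn d) : Fn d := fun x => fderiv ℝ u x (Pi.single i 1)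

/-- Partial derivative `∂_{x_i}` of a symbol. -/
def pdx (i : Fin d) (a : Sym d) : Sym d := fun x ξ => fderiv ℝ (fun y => a y ξ) x (Pi.single i 1)

/-- Partial derivative `∂_{ξ_i}` of a symbol. -/
def pdxi (i : Fin d) (a : Sym d) : Sym d := fun x ξ => fderiv ℝ (fun η => a x η) ξ (Pi.single i 1)

/-- Iterated mixed partial derivative of a symbol along a list of directions
(`Sum.inl j` = `∂_{x_j}`, `Sum.inr j` = `∂_{ξ_j}`). -/
def mderiv (L : List (Fin d ⊕ Fin d)) (a : Sym d) : Sym d :=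
  L.foldr (fun i b => match i with | Sum.inl j => pdx j b | Sum.inr j => pdxi j b) a

/-- Number of `ξ`-derivatives in a list of directions. -/
def nXi (L : List (Fin d ⊕ Fin d)) : ℕ := (L.filter fun i => i.isRight).length

/-- The set of values whose supremum is the symbol seminorm `|a|_{𝒩^m_s}`. -/
def symVals (m : ℝ) (s : ℕ) (a : Sym d) : Set ℝ :=
  { r | ∃ (L : List (Fin d ⊕ Fin d)) (x ξ : Vec d), L.length ≤ s ∧
        r = jbR ξ ^ (-m + (nXi L : ℝ)) * ‖mderiv L a x ξ‖ }

/-- Symbol seminorm `|a|_{𝒩^m_s}`. -/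
def symNorm (m : ℝ) (s : ℕ) (a : Sym d) : ℝ := sSup (symVals m s a)

/-- Membership in the symbol class `𝒩^m_s`. -/
def InSymClass (m : ℝ) (s : ℕ) (a : Sym d) : Prop :=
  ContDiff ℝ (s : ℕ∞) (Function.uncurry a) ∧ (∀ ξ, Periodic2pi fun x => a x ξ) ∧
    BddAbove (symVals m s a)

/-- Poisson bracket `{a,b}`. -/
def poisson (a b : Sym d) : Sym d := fun x ξ =>
  ∑ j, (pdxi j a x ξ * pdx j b x ξ - pdx j a x ξ * pdxi j b x ξ)

/-- The second-order bracket `σ(a,b)`. -/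
def sigmaB (a b : Sym d) : Sym d := fun x ξ =>
  ∑ j, ∑ k,
    (pdxi j (pdxi k a) x ξ * pdx j (pdx k b) x ξ
      - 2 * pdx j (pdxi k a) x ξ * pdxi j (pdx k b) x ξ
      + pdx j (pdx k a) x ξ * pdxi j (pdxi k b) x ξ)

/-- An admissible cut-off function `χ`. -/
structure IsCutoff (χ : ℝ → ℝ) : Prop where
  smooth : ContDiff ℝ (⊤ : ℕ∞) χ
  mem : ∀ t : ℝ, χ t ∈ Set.Icc (0 : ℝ) 1
  eq_one : ∀ t : ℝ, |t| ≤ 5 / 4 → χ t = 1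
  eq_zero : ∀ t : ℝ, 8 / 5 ≤ |t| → χ t = 0

/-- `x`-Fourier coefficient `â(η, ξ)` of a symbol. -/
def symCoeff (a : Sym d) (η : Zd d) (ξ : Vec d) : ℂ := fCoeff (fun x => a x ξ) η

/-- Midpoint `(j+k)/2` of two lattice points. -/
def mid (j k : Zd d) : Vec d := fun i => ((j i + k i : ℤ) : ℝ) / 2

/-- The paradifferential cut-off factor `χ_ε(|j-k|/⟨j+k⟩) = χ(|j-k|/(ε⟨j+k⟩))`. -/
def cutFactor (χ : ℝ → ℝ) (ε : ℝ) (j k : Zd d) : ℝ :=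
  χ (znorm (j - k) / (ε * jb (j + k)))

/-- The Weyl paradifferential operator `T_a`, acting on Fourier coefficient sequences:
`(T_a h)^(j) = (2π)^{-d/2} Σ_k χ_ε(|j-k|/⟨j+k⟩) â(j-k,(j+k)/2) ĥ(k)`. -/
def paraC (χ : ℝ → ℝ) (ε : ℝ) (a : Sym d) (c : Seq d) : Seq d := fun j =>
  (((2 * π : ℝ) ^ (-(d : ℝ) / 2) : ℝ) : ℂ) *
    ∑' k : Zd d, ((cutFactor χ ε j k : ℝ) : ℂ) * symCoeff a (j - k) (mid j k) * c k

/-- The operator `R_a` built from the difference of two cut-offs. -/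
def remC (χ : ℝ → ℝ) (ε₁ ε₂ : ℝ) (a : Sym d) (c : Seq d) : Seq d := fun j =>
  (((2 * π : ℝ) ^ (-(d : ℝ) / 2) : ℝ) : ℂ) *
    ∑' k : Zd d, ((cutFactor χ ε₁ j k - cutFactor χ ε₂ j k : ℝ) : ℂ) *
      symCoeff a (j - k) (mid j k) * c k

/-- Wirtinger derivative `∂_{y_j} = (∂_{Re y_j} - i ∂_{Im y_j})/2`. -/
def wdP {n : ℕ} (j : Fin n) (G : (Fin n → ℂ) → ℂ) : (Fin n → ℂ) → ℂ := fun y =>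
  (fderiv ℝ G y (Pi.single j 1) - Complex.I * fderiv ℝ G y (Pi.single j Complex.I)) / 2

/-- Wirtinger derivative `∂_{ȳ_j} = (∂_{Re y_j} + i ∂_{Im y_j})/2`. -/
def wdM {n : ℕ} (j : Fin n) (G : (Fin n → ℂ) → ℂ) : (Fin n → ℂ) → ℂ := fun y =>
  (fderiv ℝ G y (Pi.single j 1) + Complex.I * fderiv ℝ G y (Pi.single j Complex.I)) / 2

/-- The 1-jet `(u, ∇u)` of a function, as a point of `ℂ^{d+1}`. -/
def jet (u : Fn d) (x : Vec d) : Fin (d + 1) → ℂ :=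
  Fin.cons (u x) fun j => pdF j u x

/-- The Hamiltonian nonlinearity
`P(u) = (∂_{ū}F)(u,∇u) - Σ_j ∂_{x_j}((∂_{ū_{x_j}}F)(u,∇u))`. -/
def Pop (F : (Fin (d + 1) → ℂ) → ℂ) (u : Fn d) : Fn d := fun x =>
  wdM 0 F (jet u x) - ∑ j, pdF j (fun y => wdM (Fin.succ j) F (jet u y)) x

/-- `F ∈ C^∞(ℂ^{d+1};ℝ)` in the real sense, with a zero of order at least 3 at the origin. -/
def GoodF (d : ℕ) (F : (Fin (d + 1) → ℂ) → ℂ) : Prop :=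
  ContDiff ℝ (⊤ : ℕ∞) F ∧ (∀ y, (F y).im = 0) ∧ ∀ k : ℕ, k ≤ 2 → iteratedFDeriv ℝ k F 0 = 0

/-- Global ellipticity (Hypothesis 1.1). -/
def Elliptic (d : ℕ) (F : (Fin (d + 1) → ℂ) → ℂ) : Prop :=
  ∃ c₁ > (0 : ℝ), ∃ c₂ > (0 : ℝ), ∀ (ξ : Vec d) (y : Fin (d + 1) → ℂ),
    (c₁ * ∑ i, (ξ i) ^ 2 ≤
      (∑ j, ∑ k, ((ξ j * ξ k : ℝ) : ℂ) *
        ((if j = k then 1 else 0) + wdP (Fin.succ j) (wdM (Fin.succ k) F) y)).re) ∧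
    (ξ ≠ 0 → c₂ ≤
      (1 + (∑ j, ∑ k, ((ξ j * ξ k : ℝ) : ℂ) * wdP (Fin.succ j) (wdM (Fin.succ k) F) y).re
            / ∑ i, (ξ i) ^ 2) ^ 2
        - ‖∑ j, ∑ k, ((ξ j * ξ k : ℝ) : ℂ) * wdM (Fin.succ j) (wdM (Fin.succ k) F) y‖ ^ 2
            / (∑ i, (ξ i) ^ 2) ^ 2)

/-- The symbol `a₂(x,ξ) = Σ_{j,k} (∂_{ū_{x_k}}∂_{u_{x_j}}F)(u,∇u) ξ_j ξ_k`. -/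
def a2sym (F : (Fin (d + 1) → ℂ) → ℂ) (u : Fn d) : Sym d := fun x ξ =>
  ∑ j, ∑ k, ((ξ j * ξ k : ℝ) : ℂ) * wdP (Fin.succ j) (wdM (Fin.succ k) F) (jet u x)

/-- The symbol `b₂(x,ξ) = Σ_{j,k} (∂_{ū_{x_k}}∂_{ū_{x_j}}F)(u,∇u) ξ_j ξ_k`. -/
def b2sym (F : (Fin (d + 1) → ℂ) → ℂ) (u : Fn d) : Sym d := fun x ξ =>
  ∑ j, ∑ k, ((ξ j * ξ k : ℝ) : ℂ) * wdM (Fin.succ j) (wdM (Fin.succ k) F) (jet u x)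

/-- The symbol `a₁(x,ξ) = (i/2) Σ_j ((∂_{ū}∂_{u_{x_j}}F) - (∂_u∂_{ū_{x_j}}F))(u,∇u) ξ_j`. -/
def a1sym (F : (Fin (d + 1) → ℂ) → ℂ) (u : Fn d) : Sym d := fun x ξ =>
  Complex.I / 2 * ∑ j, ((ξ j : ℝ) : ℂ) *
    (wdM 0 (wdP (Fin.succ j) F) (jet u x) - wdP 0 (wdM (Fin.succ j) F) (jet u x))

/-- Conjugation of a coefficient sequence: the sequence of `conj u`. -/
def starSeq (c : Seq d) : Seq d := fun n => (starRingEnd ℂ) (c (-n))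

/-- Pointwise conjugate of a function. -/
def starF (u : Fn d) : Fn d := fun x => (starRingEnd ℂ) (u x)

/-- Pointwise conjugate of a symbol. -/
def starSym (a : Sym d) : Sym d := fun x ξ => (starRingEnd ℂ) (a x ξ)

/-- The symbol `(x,ξ) ↦ conj (a(x,-ξ))`. -/
def flipSym (a : Sym d) : Sym d := fun x ξ => (starRingEnd ℂ) (a x (-ξ))

/-- The matrix `E = diag(1,-1)` as a sign vector. -/
def Em : Fin 2 → ℂ := ![1, -1]

/-- `Op^BW` of a 2×2 matrix of symbols, acting on vectors of coefficient sequences. -/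
def opBWmat (χ : ℝ → ℝ) (ε : ℝ) (A : Fin 2 → Fin 2 → Sym d) (C : Fin 2 → Seq d) :
    Fin 2 → Seq d := fun σ j => ∑ τ, paraC χ ε (A σ τ) (C τ) j

/-- The symbol `|ξ|²`. -/
def sq2sym (d : ℕ) : Sym d := fun _ ξ => (((rnorm ξ) ^ 2 : ℝ) : ℂ)

/-- The matrix of symbols `A₂(x,ξ)`. -/
def A2mat (F : (Fin (d + 1) → ℂ) → ℂ) (u : Fn d) : Fin 2 → Fin 2 → Sym d :=
  ![![a2sym F u, b2sym F u], ![flipSym (b2sym F u), a2sym F u]]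

/-- The matrix of symbols `A₁(x,ξ)`. -/
def A1mat (F : (Fin (d + 1) → ℂ) → ℂ) (u : Fn d) : Fin 2 → Fin 2 → Sym d :=
  ![![a1sym F u, 0], ![0, flipSym (a1sym F u)]]

/-- The full matrix of symbols `|ξ|²𝟙 + A₂(x,ξ) + A₁(x,ξ)`. -/
def sysSym (F : (Fin (d + 1) → ℂ) → ℂ) (u : Fn d) : Fin 2 → Fin 2 → Sym d := fun σ τ =>
  fun x ξ => (if σ = τ then sq2sym d x ξ else 0) + A2mat F u σ τ x ξ + A1mat F u σ τ x ξ

/-- `H^s` norm of a vector of coefficient sequences. -/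
def hsNormVec (s : ℝ) (C : Fin 2 → Seq d) : ℝ := hsNorm s (C 0) + hsNorm s (C 1)

/-- Membership of a vector of coefficient sequences in `H^s`. -/
def InHsVec (s : ℝ) (C : Fin 2 → Seq d) : Prop := InHsSeq s (C 0) ∧ InHsSeq s (C 1)

/-- The `L²` pairing `(U,V) = ∫ (u v̄ + ū v)`, at the level of Fourier coefficients. -/
def pairL2 (C E : Fin 2 → Seq d) : ℂ :=
  ∑' n : Zd d, (C 0 n * (starRingEnd ℂ) (E 0 n) + C 1 n * (starRingEnd ℂ) (E 1 n))

/-- The scalar `L²` pairing, at the level of Fourier coefficients. -/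
def pairS (c e : Seq d) : ℂ := ∑' n : Zd d, c n * (starRingEnd ℂ) (e n)

/-- A matrix of operators is real-to-real: it preserves the subspace `𝒰 = {(u, ū)}`. -/
def PreservesReality (M : (Fin 2 → Seq d) → (Fin 2 → Seq d)) : Prop :=
  ∀ c : Seq d, M ![c, starSeq c] 1 = starSeq (M ![c, starSeq c] 0)

/-- The coefficient vector of `(v(t), conj v(t))`. -/
def Vvec (v : ℝ → Fn d) (t : ℝ) : Fin 2 → Seq d :=
  ![fCoeff (v t), starSeq (fCoeff (v t))]

/-- `V = (v, v̄)` solves `V̇ = iE Op^BW(|ξ|²𝟙 + A₂ + A₁)V` on `[0,T)`. -/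
def SolvesLin (χ : ℝ → ℝ) (ε : ℝ) (F : (Fin (d + 1) → ℂ) → ℂ) (T : ℝ)
    (u v : ℝ → Fn d) : Prop :=
  ∀ᵐ t ∂(volume.restrict (Set.Ico (0 : ℝ) T)), ∀ (σ : Fin 2) (n : Zd d),
    HasDerivAt (fun τ => Vvec v τ σ n)
      (Complex.I * Em σ * opBWmat χ ε (sysSym F (u t)) (Vvec v t) σ n) t

/-- The regularity hypothesis (4.1):
`u ∈ L^∞([0,T);H^s) ∩ Lip([0,T);H^{s-2})`, with
`sup_t ‖u(t)‖_{H^{2s₀+7}} ≤ r` and `‖∂_t u‖_{H^{2s₀+5}} ≤ r` (as a Lipschitz bound). -/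
def RegHyp (s₀ : ℕ) (s T r : ℝ) (u : ℝ → Fn d) : Prop :=
  (∀ t ∈ Set.Ico (0 : ℝ) T, InHs s (u t)) ∧
  (∃ M : ℝ, ∀ t ∈ Set.Ico (0 : ℝ) T, sobNorm s (u t) ≤ M) ∧
  (∃ L : ℝ, ∀ t₁ ∈ Set.Ico (0 : ℝ) T, ∀ t₂ ∈ Set.Ico (0 : ℝ) T,
    sobNorm (s - 2) (u t₁ - u t₂) ≤ L * |t₁ - t₂|) ∧
  (∀ t ∈ Set.Ico (0 : ℝ) T, sobNorm (2 * (s₀ : ℝ) + 7) (u t) ≤ r) ∧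
  (∀ t₁ ∈ Set.Ico (0 : ℝ) T, ∀ t₂ ∈ Set.Ico (0 : ℝ) T,
    sobNorm (2 * (s₀ : ℝ) + 5) (u t₁ - u t₂) ≤ r * |t₁ - t₂|)

/-- `v ∈ L^∞([0,T);H^s) ∩ Lip([0,T);H^{s-2})`. -/
def RegSol (s T : ℝ) (v : ℝ → Fn d) : Prop :=
  (∀ t ∈ Set.Ico (0 : ℝ) T, InHs s (v t)) ∧
  (∃ M : ℝ, ∀ t ∈ Set.Ico (0 : ℝ) T, sobNorm s (v t) ≤ M) ∧
  (∃ L : ℝ, ∀ t₁ ∈ Set.Ico (0 : ℝ) T, ∀ t₂ ∈ Set.Ico (0 : ℝ) T,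
    sobNorm (s - 2) (v t₁ - v t₂) ≤ L * |t₁ - t₂|)

/-- The high-frequency cut-off `𝒳_R(ξ) = 1 - χ(|ξ|/R)`. -/
def cutXR (χ : ℝ → ℝ) (R : ℝ) (ξ : Vec d) : ℝ := 1 - χ (rnorm ξ / R)

/-- `ã_{2,R}(x,ξ) = |ξ|^{-2} a₂(x,ξ) 𝒳_R(ξ)`. -/
def a2til (F : (Fin (d + 1) → ℂ) → ℂ) (u : Fn d) (χ : ℝ → ℝ) (R : ℝ) : Sym d := fun x ξ =>
  ((((rnorm ξ) ^ 2)⁻¹ * cutXR χ R ξ : ℝ) : ℂ) * a2sym F u x ξ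

/-- `b̃_{2,R}(x,ξ) = |ξ|^{-2} b₂(x,ξ) 𝒳_R(ξ)`. -/
def b2til (F : (Fin (d + 1) → ℂ) → ℂ) (u : Fn d) (χ : ℝ → ℝ) (R : ℝ) : Sym d := fun x ξ =>
  ((((rnorm ξ) ^ 2)⁻¹ * cutXR χ R ξ : ℝ) : ℂ) * b2sym F u x ξ

/-- `λ₂ = ((1+ã_{2,R})² - |b̃_{2,R}|²)^{1/2}`. -/
def lam2 (F : (Fin (d + 1) → ℂ) → ℂ) (u : Fn d) (χ : ℝ → ℝ) (R : ℝ) :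
    Vec d → Vec d → ℝ := fun x ξ =>
  Real.sqrt ((1 + (a2til F u χ R x ξ).re) ^ 2 - ‖b2til F u χ R x ξ‖ ^ 2)

/-- The normalizing denominator `(2λ₂(1+ã_{2,R}+λ₂))^{1/2}`. -/
def sden (F : (Fin (d + 1) → ℂ) → ℂ) (u : Fn d) (χ : ℝ → ℝ) (R : ℝ) :
    Vec d → Vec d → ℝ := fun x ξ =>
  Real.sqrt (2 * lam2 F u χ R x ξ * (1 + (a2til F u χ R x ξ).re + lam2 F u χ R x ξ))

/-- The symbol `s₁`. -/
def s1sym (F : (Fin (d + 1) → ℂ) → ℂ) (u : Fn d) (χ : ℝ → ℝ) (R : ℝ) : Sym d := fun x ξ =>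
  (((1 + (a2til F u χ R x ξ).re + lam2 F u χ R x ξ) / sden F u χ R x ξ : ℝ) : ℂ)

/-- The symbol `s₂`. -/
def s2sym (F : (Fin (d + 1) → ℂ) → ℂ) (u : Fn d) (χ : ℝ → ℝ) (R : ℝ) : Sym d := fun x ξ =>
  -b2til F u χ R x ξ / ((sden F u χ R x ξ : ℝ) : ℂ)

/-- `ã⁺_{2,R} = λ₂ - 1`. -/
def a2plus (F : (Fin (d + 1) → ℂ) → ℂ) (u : Fn d) (χ : ℝ → ℝ) (R : ℝ) : Sym d := fun x ξ =>
  ((lam2 F u χ R x ξ - 1 : ℝ) : ℂ)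

/-- The diagonalized second-order symbol `a₂^{(1)}(x,ξ) = |ξ|² ã⁺_{2,R}(x,ξ)`. -/
def a2one (F : (Fin (d + 1) → ℂ) → ℂ) (u : Fn d) (χ : ℝ → ℝ) (R : ℝ) : Sym d := fun x ξ =>
  (((rnorm ξ) ^ 2 * (lam2 F u χ R x ξ - 1) : ℝ) : ℂ)

/-- The real scalar symbol `ℒ(x,ξ) = |ξ|² + a₂^{(1)}(x,ξ)`. -/
def Lscal (F : (Fin (d + 1) → ℂ) → ℂ) (u : Fn d) (χ : ℝ → ℝ) (R : ℝ) :
    Vec d → Vec d → ℝ := fun x ξ =>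
  (rnorm ξ) ^ 2 + (rnorm ξ) ^ 2 * (lam2 F u χ R x ξ - 1)

/-- The matrix `S(x,ξ)`. -/
def Smat (F : (Fin (d + 1) → ℂ) → ℂ) (u : Fn d) (χ : ℝ → ℝ) (R : ℝ) (x ξ : Vec d) :
    Matrix (Fin 2) (Fin 2) ℂ :=
  !![s1sym F u χ R x ξ, s2sym F u χ R x ξ;
     (starRingEnd ℂ) (s2sym F u χ R x ξ), s1sym F u χ R x ξ]

/-- The matrix `S^{-1}(x,ξ)`. -/
def SmatInv (F : (Fin (d + 1) → ℂ) → ℂ) (u : Fn d) (χ : ℝ → ℝ) (R : ℝ) (x ξ : Vec d) :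
    Matrix (Fin 2) (Fin 2) ℂ :=
  !![s1sym F u χ R x ξ, -s2sym F u χ R x ξ;
     -(starRingEnd ℂ) (s2sym F u χ R x ξ), s1sym F u χ R x ξ]

/-- The matrix `Ã_{2,R}(x,ξ)`. -/
def A2tilMat (F : (Fin (d + 1) → ℂ) → ℂ) (u : Fn d) (χ : ℝ → ℝ) (R : ℝ) (x ξ : Vec d) :
    Matrix (Fin 2) (Fin 2) ℂ :=
  !![a2til F u χ R x ξ, b2til F u χ R x ξ;
     (starRingEnd ℂ) (b2til F u χ R x (-ξ)), a2til F u χ R x ξ]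

/-- The matrix `E = diag(1,-1)`. -/
def EmatM : Matrix (Fin 2) (Fin 2) ℂ := !![1, 0; 0, -1]

/-- The matrix of symbols `S^{-1}(x,ξ)`. -/
def SinvMatSym (F : (Fin (d + 1) → ℂ) → ℂ) (u : Fn d) (χ : ℝ → ℝ) (R : ℝ) :
    Fin 2 → Fin 2 → Sym d :=
  ![![s1sym F u χ R, fun x ξ => -s2sym F u χ R x ξ],
    ![fun x ξ => -(starRingEnd ℂ) (s2sym F u χ R x ξ), s1sym F u χ R]]

/-- The entry `s₁^{(1)}` of the matrix `S₁`. -/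
def s1_1 (F : (Fin (d + 1) → ℂ) → ℂ) (u : Fn d) (χ : ℝ → ℝ) (R : ℝ) : Sym d := fun x ξ =>
  1 / (2 * Complex.I) *
    (poisson (s2sym F u χ R) (starSym (s2sym F u χ R)) x ξ * s1sym F u χ R x ξ
      + 2 * poisson (s1sym F u χ R) (s2sym F u χ R) x ξ *
          (starRingEnd ℂ) (s2sym F u χ R x ξ))

/-- The entry `s₂^{(1)}` of the matrix `S₁`. -/
def s2_1 (F : (Fin (d + 1) → ℂ) → ℂ) (u : Fn d) (χ : ℝ → ℝ) (R : ℝ) : Sym d := fun x ξ =>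
  1 / (2 * Complex.I) *
    (poisson (s2sym F u χ R) (starSym (s2sym F u χ R)) x ξ * s2sym F u χ R x ξ
      + 2 * poisson (s1sym F u χ R) (s2sym F u χ R) x ξ * s1sym F u χ R x ξ)

/-- The matrix `S₁(x,ξ)`. -/
def S1mat (F : (Fin (d + 1) → ℂ) → ℂ) (u : Fn d) (χ : ℝ → ℝ) (R : ℝ) (x ξ : Vec d) :
    Matrix (Fin 2) (Fin 2) ℂ :=
  (1 / (2 * Complex.I)) •
    (!![poisson (s2sym F u χ R) (starSym (s2sym F u χ R)) x ξ,
          2 * poisson (s1sym F u χ R) (s2sym F u χ R) x ξ;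
        -2 * poisson (s1sym F u χ R) (starSym (s2sym F u χ R)) x (-ξ),
          poisson (s2sym F u χ R) (starSym (s2sym F u χ R)) x (-ξ)] *
      Smat F u χ R x ξ)

/-- The symbol `g₁`. -/
def g1sym (F : (Fin (d + 1) → ℂ) → ℂ) (u : Fn d) (χ : ℝ → ℝ) (R : ℝ) : Sym d := fun x ξ =>
  1 / (2 * Complex.I) * poisson (s1_1 F u χ R) (s1sym F u χ R) x ξ
    - 1 / (2 * Complex.I) * poisson (s2_1 F u χ R) (starSym (s2sym F u χ R)) x ξ
    + 1 / 8 * sigmaB (s2sym F u χ R) (starSym (s2sym F u χ R)) x ξ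

/-- The symbol `g₂`. -/
def g2sym (F : (Fin (d + 1) → ℂ) → ℂ) (u : Fn d) (χ : ℝ → ℝ) (R : ℝ) : Sym d := fun x ξ =>
  -(1 / (2 * Complex.I)) * poisson (s1_1 F u χ R) (s2sym F u χ R) x ξ
    + 1 / (2 * Complex.I) * poisson (s2_1 F u χ R) (s1sym F u χ R) x ξ

/-- The derivative operator `∂_{x_i}` at the level of Fourier coefficients. -/
def dOp (i : Fin d) (c : Seq d) : Seq d := fun n => Complex.I * ((n i : ℝ) : ℂ) * c n

/-- A positive constant depending monotonically on a size parameter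
(hence bounded from above as the parameter goes to zero). -/
def GoodConst (C : ℝ → ℝ) : Prop := Monotone C ∧ ∀ x : ℝ, 0 < C x

/-! On the Fourier side the symbol of `T_a ∘ T_b` at frequencies `(j, l)` is a sum over the
intermediate frequency `k` of `â(j-k, (j+k)/2) b̂(k-l, (k+l)/2)`. With `p = j - k`, `q = k - l` and
the central frequency `ξ = (j+l)/2`, the two evaluation points are `ξ + q/2` and `ξ - p/2`. A
Taylor expansion of `t ↦ â(p, ξ + tq/2) b̂(q, ξ - tp/2)` on `[0, 1]`, in which each power of `p` or
`q` turns into an `x`-derivative, has the Fourier coefficients of `ab`, `{a,b}/(2i)` and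
`-σ(a,b)/8` as its first three terms; its third derivative gains `⟨ξ⟩⁻³` and costs three powers of
the decay in `p` and `q`. Where the two cut-offs multiply to something other than the cut-off of
`(j, l)`, one of the shifts is comparable to `ξ`, so decay in the shifts again pays for `⟨ξ⟩⁻³`.
Since `j`, `k`, `l` are all comparable on the support, the kernel of the remainder is dominated by
a product of summable convolution kernels `⟨p⟩⁻ⁿ ⟨q⟩⁻ⁿ` with `n > d`, and two applications of
Schur's test give the Sobolev bound. -/

/-! ### Fourier coefficients -/

/-- The normalisation `(2π)^{-d/2}` of the Fourier coefficients. -/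
def fourierConst (d : ℕ) : ℂ := (((2 * π : ℝ) ^ (-(d : ℝ) / 2) : ℝ) : ℂ)

/-- The exponential `e^{-i n·x}`. -/
def expNeg (n : Zd d) (x : Vec d) : ℂ :=
  Complex.exp (-Complex.I * ((∑ i, (n i : ℝ) * x i : ℝ) : ℂ))

theorem fourierConst_mul_self (d : ℕ) :
    fourierConst d * fourierConst d = (((2 * π) ^ d)⁻¹ : ℝ) := by
  rw [fourierConst, ← Complex.ofReal_mul, ← Real.rpow_add (by positivity), ← Real.rpow_natCast,
    ← Real.rpow_neg (by positivity)]
  congr 2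
  ring

theorem fourierConst_ne_zero (d : ℕ) : fourierConst d ≠ 0 :=
  Complex.ofReal_ne_zero.2 (by positivity)

theorem continuous_expNeg (n : Zd d) : Continuous (expNeg n) := by
  unfold expNeg
  fun_prop

theorem norm_expNeg (n : Zd d) (x : Vec d) : ‖expNeg n x‖ = 1 := by
  simp [expNeg, Complex.norm_exp]

theorem expNeg_sub_left (n k : Zd d) (x : Vec d) :
    expNeg (n - k) x = expNeg n x * expNeg (-k) x := by
  simp only [expNeg, ← Complex.exp_add, ← mul_add, ← Complex.ofReal_add,
    ← Finset.sum_add_distrib]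
  congr! 4 with i
  push_cast [Pi.sub_apply, Pi.neg_apply]
  ring

theorem fCoeff_eq_integral (u : Fn d) (n : Zd d) :
    fCoeff u n = fourierConst d * ∫ x in box d, u x * expNeg n x := rfl

theorem measurableSet_box : MeasurableSet (box d) :=
  MeasurableSet.univ_pi fun _ => measurableSet_Ioc

theorem box_subset_Icc : box d ⊆ Set.Icc (0 : Vec d) (fun _ => 2 * π) := fun _ hx =>
  ⟨fun i => (hx i trivial).1.le, fun i => (hx i trivial).2⟩

theorem volume_box_lt_top : volume (box d) < ⊤ :=
  (measure_mono box_subset_Icc).trans_lt isCompact_Icc.measure_lt_top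

instance isFiniteMeasure_restrict_box : IsFiniteMeasure (volume.restrict (box d)) :=
  ⟨by simpa using volume_box_lt_top⟩

theorem integrableOn_box {E : Type*} [NormedAddCommGroup E] {u : Vec d → E}
    (hu : Continuous u) : IntegrableOn u (box d) :=
  (hu.continuousOn.integrableOn_compact isCompact_Icc).mono_set box_subset_Icc

/-- The constant `(2π)^{-d/2} |box| = (2π)^{d/2}` bounding `û` by the supremum of `u`. -/
def fCoeffBound (d : ℕ) : ℝ := ‖fourierConst d‖ * (volume : Measure (Vec d)).real (box d)

theorem fCoeffBound_nonneg : 0 ≤ fCoeffBound d := by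
  unfold fCoeffBound
  positivity

theorem norm_fCoeff_le {u : Fn d} {B : ℝ} (hB : ∀ x, ‖u x‖ ≤ B) (n : Zd d) :
    ‖fCoeff u n‖ ≤ fCoeffBound d * B := by
  rw [fCoeff_eq_integral, norm_mul, fCoeffBound, mul_assoc, mul_comm (volume.real _)]
  gcongr
  refine norm_setIntegral_le_of_norm_le_const volume_box_lt_top fun x _ => ?_
  rw [norm_mul, norm_expNeg, mul_one]
  exact hB x

theorem fCoeff_const_mul (z : ℂ) (u : Fn d) (n : Zd d) :
    fCoeff (fun x => z * u x) n = z * fCoeff u n := by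
  simp only [fCoeff_eq_integral, mul_assoc, integral_const_mul]
  ring

theorem fCoeff_sum {ι : Type*} (S : Finset ι) {u : ι → Fn d} (hu : ∀ i ∈ S, Continuous (u i))
    (n : Zd d) : fCoeff (fun x => ∑ i ∈ S, u i x) n = ∑ i ∈ S, fCoeff (u i) n := by
  simp only [fCoeff_eq_integral, Finset.sum_mul]
  rw [integral_finsetSum _ fun i hi => integrableOn_box ((hu i hi).fun_mul (continuous_expNeg n)),
    Finset.mul_sum]

theorem fCoeff_add {u v : Fn d} (hu : Continuous u) (hv : Continuous v) (n : Zd d) :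
    fCoeff (fun x => u x + v x) n = fCoeff u n + fCoeff v n := by
  simp only [fCoeff_eq_integral, add_mul]
  rw [integral_add (integrableOn_box (hu.fun_mul (continuous_expNeg n)))
    (integrableOn_box (hv.fun_mul (continuous_expNeg n))), mul_add]

theorem hasDerivAt_fCoeff {F F' : ℝ → Fn d} (hF : ∀ t, Continuous (F t))
    (hF' : Continuous (Function.uncurry F'))
    (h : ∀ t x, HasDerivAt (fun τ => F τ x) (F' t x) t) (n : Zd d) (t₀ : ℝ) :
    HasDerivAt (fun t => fCoeff (F t) n) (fCoeff (F' t₀) n) t₀ := by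
  have hcont : Continuous fun z : ℝ × Vec d => F' z.1 z.2 * expNeg n z.2 :=
    hF'.mul ((continuous_expNeg n).comp continuous_snd)
  obtain ⟨B, hB⟩ := ((isCompact_Icc (a := t₀ - 1) (b := t₀ + 1)).prod
    (isCompact_Icc (a := (0 : Vec d)) (b := fun _ => 2 * π))).exists_bound_of_continuousOn
      hcont.continuousOn
  refine HasDerivAt.const_mul (fourierConst d) ?_
  refine (hasDerivAt_integral_of_dominated_loc_of_deriv_le (𝕜 := ℝ)
    (μ := volume.restrict (box d)) (F := fun t x => F t x * expNeg n x)
    (F' := fun t x => F' t x * expNeg n x) (bound := fun _ => B)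
    (Icc_mem_nhds (sub_one_lt t₀) (lt_add_one t₀))
    (Eventually.of_forall fun t => ((hF t).mul (continuous_expNeg n)).aestronglyMeasurable)
    (integrableOn_box ((hF t₀).mul (continuous_expNeg n)))
    (hcont.comp (Continuous.prodMk_right t₀)).aestronglyMeasurable
    ?_ (integrable_const B) (ae_of_all _ fun x t _ => (h t x).mul_const _)).2
  filter_upwards [ae_restrict_mem measurableSet_box] with x hx t ht
  exact hB (t, x) ⟨ht, box_subset_Icc hx⟩

/-- The point of `(ℝ/ℤ)^d` represented by `x`. -/
def toTorus (x : Vec d) : UnitAddTorus (Fin d) := fun i => (x i : UnitAddCircle)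

theorem toTorus_add (x y : Vec d) : toTorus (x + y) = toTorus x + toTorus y := by
  ext i
  simp [toTorus]

theorem isOpenQuotientMap_toTorus : IsOpenQuotientMap (toTorus (d := d)) :=
  IsOpenQuotientMap.piMap fun _ => QuotientAddGroup.isOpenQuotientMap_mk

theorem mFourier_toTorus (n : Zd d) (x : Vec d) :
    UnitAddTorus.mFourier n (toTorus x) = expNeg (-n) ((2 * π) • x) := by
  simp only [UnitAddTorus.mFourier, ContinuousMap.coe_mk, toTorus, fourier_coe_apply, expNeg,
    ← Complex.exp_sum]
  push_cast
  rw [Finset.mul_sum]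
  congr! 2 with i
  simp
  ring

theorem exists_periodic_lift {u : Fn d} (hu : Continuous u) (hp : Periodic2pi u) :
    ∃ f : C(UnitAddTorus (Fin d), ℂ), ∀ x : Vec d, f (toTorus x) = u ((2 * π) • x) := by
  let g : C(Vec d, ℂ) := ⟨fun x => u ((2 * π) • x), hu.comp (continuous_const_smul (2 * π))⟩
  let P : C(Vec d, UnitAddTorus (Fin d)) := ⟨toTorus, isOpenQuotientMap_toTorus.continuous⟩
  have hP : Topology.IsQuotientMap P := isOpenQuotientMap_toTorus.isQuotientMap
  have hg : Function.FactorsThrough g P := by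
    intro x y hxy
    have hint (i : Fin d) : ∃ n : ℤ, x i = y i + n := by
      obtain ⟨m, hm⟩ := QuotientAddGroup.eq_iff_sub_mem.1 (congrFun hxy i)
      refine ⟨m, ?_⟩
      simp only [zsmul_eq_mul, mul_one] at hm
      linarith
    choose n hn using hint
    have hshift : (2 * π) • x = fun i => ((2 * π) • y) i + 2 * π * (n i : ℝ) := by
      ext i
      simp only [Pi.smul_apply, smul_eq_mul, hn i]
      ring
    change u _ = u _
    rw [hshift, hp]
  exact ⟨hP.lift g hg, fun x => congrArg (fun h : C(Vec d, ℂ) => h x) (hP.lift_comp g hg)⟩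

open scoped Pointwise in
theorem smul_unitCube_eq_box :
    (2 * π) • {x : Vec d | ∀ i, x i ∈ Set.Ioc ((0 : Vec d) i) ((0 : Vec d) i + 1)} = box d := by
  ext x
  rw [Set.mem_smul_set_iff_inv_smul_mem₀ Real.two_pi_pos.ne']
  simp only [box, Set.mem_pi, Set.mem_ofPred_eq, Set.mem_univ, true_imp_iff, Set.mem_Ioc,
    Pi.zero_apply, zero_add, Pi.smul_apply, smul_eq_mul]
  refine forall_congr' fun i => and_congr (mul_pos_iff_of_pos_left (by positivity)) ?_
  rw [inv_mul_le_iff₀ (by positivity), mul_one]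

theorem mFourierCoeff_lift {u : Fn d} {f : C(UnitAddTorus (Fin d), ℂ)}
    (hf : ∀ x : Vec d, f (toTorus x) = u ((2 * π) • x)) (n : Zd d) :
    UnitAddTorus.mFourierCoeff f n = fourierConst d * fCoeff u n := by
  have hscale := Measure.setIntegral_comp_smul_of_pos (μ := (volume : Measure (Vec d)))
    (fun x => u x * expNeg n x)
    {x : Vec d | ∀ i, x i ∈ Set.Ioc ((0 : Vec d) i) ((0 : Vec d) i + 1)} Real.two_pi_pos
  rw [smul_unitCube_eq_box, Module.finrank_fintype_fun_eq_card, Fintype.card_fin] at hscale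
  rw [fCoeff_eq_integral, ← mul_assoc, fourierConst_mul_self, ← Complex.real_smul, ← hscale,
    UnitAddTorus.mFourierCoeff_eq_integral f n 0]
  refine integral_congr_ae (ae_of_all _ fun x => ?_)
  change UnitAddTorus.mFourier (-n) (toTorus x) • f (toTorus x) = _
  rw [hf, mFourier_toTorus, neg_neg, smul_eq_mul, mul_comm]

theorem hasSum_fCoeff {u : Fn d} (hu : Continuous u) (hp : Periodic2pi u)
    (hs : Summable (fCoeff u)) (x : Vec d) :
    HasSum (fun n => fourierConst d * fCoeff u n * expNeg (-n) x) (u x) := by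
  obtain ⟨f, hf⟩ := exists_periodic_lift hu hp
  have hcoeff := mFourierCoeff_lift hf
  have hsum : Summable (UnitAddTorus.mFourierCoeff f) := by
    rw [funext hcoeff]
    exact hs.mul_left _
  have hx : (2 * π) • ((2 * π)⁻¹ • x) = x := smul_inv_smul₀ Real.two_pi_pos.ne' x
  have h := UnitAddTorus.hasSum_mFourier_series_apply_of_summable hsum
    (toTorus ((2 * π)⁻¹ • x))
  simpa only [hf, mFourier_toTorus, hx, hcoeff, smul_eq_mul] using h

theorem mFourier_add_apply (n : Zd d) (t τ : UnitAddTorus (Fin d)) :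
    UnitAddTorus.mFourier n (t + τ) =
      UnitAddTorus.mFourier n t * UnitAddTorus.mFourier n τ := by
  simp [UnitAddTorus.mFourier, fourier_apply, AddCircle.toCircle_add, Finset.prod_mul_distrib]

theorem mFourierCoeff_translate (f : C(UnitAddTorus (Fin d), ℂ)) (τ : UnitAddTorus (Fin d))
    (n : Zd d) : UnitAddTorus.mFourier (-n) τ *
      UnitAddTorus.mFourierCoeff (fun t => f (t + τ)) n = UnitAddTorus.mFourierCoeff f n := by
  have h := integral_add_right_eq_self
    (μ := Measure.pi fun _ : Fin d => (AddCircle.haarAddCircle : Measure UnitAddCircle))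
    (fun t => UnitAddTorus.mFourier (-n) t • f t) τ
  simp only [mFourier_add_apply, mul_comm _ (UnitAddTorus.mFourier (-n) τ), smul_eq_mul,
    mul_assoc, integral_const_mul] at h
  exact h

theorem fCoeff_translate {u : Fn d} (hu : Continuous u) (hp : Periodic2pi u) (y : Vec d)
    (n : Zd d) : expNeg n y * fCoeff (fun x => u (x + y)) n = fCoeff u n := by
  obtain ⟨f, hf⟩ := exists_periodic_lift hu hp
  have hy : (2 * π) • ((2 * π)⁻¹ • y) = y := smul_inv_smul₀ Real.two_pi_pos.ne' y
  let τ : UnitAddTorus (Fin d) := toTorus ((2 * π)⁻¹ • y)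
  let g : C(UnitAddTorus (Fin d), ℂ) := f.comp ⟨fun t => t + τ, continuous_add_const τ⟩
  have hg (x : Vec d) : g (toTorus x) = u ((2 * π) • x + y) := by
    change f (toTorus x + toTorus ((2 * π)⁻¹ • y)) = _
    rw [← toTorus_add, hf, smul_add, hy]
  refine mul_left_cancel₀ (fourierConst_ne_zero d) ?_
  rw [mul_left_comm, ← mFourierCoeff_lift (u := fun x => u (x + y)) hg, ← mFourierCoeff_lift hf,
    ← mFourierCoeff_translate f τ, mFourier_toTorus, neg_neg, hy]
  rfl

theorem hasSum_fCoeff_mul {u v : Fn d} (hu : Continuous u) (hv : Continuous v)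
    (hp : Periodic2pi v) (hs : Summable (fCoeff v)) (n : Zd d) :
    HasSum (fun k => fourierConst d * (fCoeff u (n - k) * fCoeff v k))
      (fCoeff (fun x => u x * v x) n) := by
  let F : Zd d → Fn d := fun k x => fourierConst d * fCoeff v k * (u x * expNeg (n - k) x)
  have hF (k : Zd d) : Continuous (F k) :=
    continuous_const.mul (hu.mul (continuous_expNeg _))
  have hnorm (k : Zd d) :
      ∫ x in box d, ‖F k x‖ = ‖fourierConst d * fCoeff v k‖ * ∫ x in box d, ‖u x‖ := by
    simp only [F, norm_mul _ (u _ * _), norm_mul (u _), norm_expNeg, mul_one, integral_const_mul]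
  have hpoint (x : Vec d) : ∑' k, F k x = u x * v x * expNeg n x := by
    have h := (hasSum_fCoeff hv hp hs x).mul_left (u x * expNeg n x)
    rw [mul_right_comm, ← h.tsum_eq]
    refine tsum_congr fun k => ?_
    simp only [F, expNeg_sub_left]
    ring
  have hint := hasSum_integral_of_summable_integral_norm (μ := volume.restrict (box d)) (F := F)
    (fun k => integrableOn_box (hF k))
    (by simpa only [hnorm] using ((hs.mul_left (fourierConst d)).norm).mul_right _)
  simp only [hpoint] at hint
  refine (hint.mul_left (fourierConst d)).congr_fun fun k => ?_
  rw [fCoeff_eq_integral u, integral_const_mul]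
  ring

theorem fCoeff_pdF (i : Fin d) {u : Fn d} (hu : ContDiff ℝ 1 u) (hp : Periodic2pi u)
    (n : Zd d) : fCoeff (pdF i u) n = Complex.I * (n i : ℂ) * fCoeff u n := by
  have hpd : Continuous (pdF i u) :=
    (hu.continuous_fderiv one_ne_zero).clm_apply continuous_const
  have htranslate := hasDerivAt_fCoeff (F := fun t x => u (x + t • Pi.single i 1))
    (F' := fun t x => pdF i u (x + t • Pi.single i 1))
    (fun t => hu.continuous.comp (by fun_prop)) (hpd.comp (by fun_prop)) (fun t x => by
      have hline : HasDerivAt (fun τ : ℝ => x + τ • (Pi.single i 1 : Vec d)) (Pi.single i 1) t := by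
        simpa using ((hasDerivAt_id t).smul_const (Pi.single i (1 : ℝ) : Vec d)).const_add x
      exact (hu.differentiable one_ne_zero _).hasFDerivAt.comp_hasDerivAt t hline) n 0
  have hphase (t : ℝ) : fCoeff (fun x => u (x + t • Pi.single i 1)) n =
      Complex.exp (Complex.I * n i * t) * fCoeff u n := by
    rw [← fCoeff_translate hu.continuous hp (t • Pi.single i 1), expNeg, ← mul_assoc,
      ← Complex.exp_add]
    simp [Pi.single_apply, mul_assoc]
  simp only [hphase, zero_smul, add_zero] at htranslate
  refine htranslate.unique ?_
  have hexp : HasDerivAt (fun t : ℝ => Complex.exp (Complex.I * n i * t))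
      (Complex.I * n i) 0 := by
    simpa using (((hasDerivAt_id (0 : ℝ)).ofReal_comp).const_mul (Complex.I * (n i : ℂ))).cexp
  exact hexp.mul_const _

/-! ### Symbols and their Fourier coefficients -/

/-- `2π`-periodicity of a symbol in the space variable `x`. -/
def XPeriodic (a : Sym d) : Prop := ∀ ξ, Periodic2pi fun x => a x ξ

theorem one_le_jbR (ξ : Vec d) : 1 ≤ jbR ξ :=
  Real.one_le_sqrt.2 (le_add_of_nonneg_right (Finset.sum_nonneg fun i _ => sq_nonneg (ξ i)))

theorem jbR_pos (ξ : Vec d) : 0 < jbR ξ := zero_lt_one.trans_le (one_le_jbR ξ)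

theorem one_le_jb (p : Zd d) : 1 ≤ jb p := one_le_jbR fun i => (p i : ℝ)

theorem jb_pos (p : Zd d) : 0 < jb p := jbR_pos fun i => (p i : ℝ)

theorem abs_le_jb (p : Zd d) (i : Fin d) : |(p i : ℝ)| ≤ jb p := by
  refine Real.abs_le_sqrt ?_
  have := Finset.single_le_sum (f := fun i => (p i : ℝ) ^ 2) (fun i _ => sq_nonneg _)
    (Finset.mem_univ i)
  linarith

theorem jb_le_one_add_mul {p : Zd d} {R : ℝ} (hR : 0 ≤ R) (h : ∀ i, |(p i : ℝ)| ≤ R) :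
    jb p ≤ 1 + d * R := by
  refine Real.sqrt_le_iff.2 ⟨by positivity, ?_⟩
  have hsum : ∑ i, (p i : ℝ) ^ 2 ≤ d * R ^ 2 := by
    simpa using Finset.sum_le_sum fun i (_ : i ∈ Finset.univ) => sq_le_sq' (abs_le.1 (h i)).1
      (abs_le.1 (h i)).2
  have hd : (d : ℝ) * R ^ 2 ≤ d ^ 2 * R ^ 2 := by
    gcongr
    exact_mod_cast Nat.le_self_pow two_ne_zero d
  have : 0 ≤ d * R := by positivity
  linarith

theorem exists_jb_le_mul_abs {p : Zd d} (hp : p ≠ 0) :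
    ∃ i, jb p ≤ (1 + d) * |(p i : ℝ)| := by
  obtain ⟨i₀, hi₀⟩ := Function.ne_iff.1 hp
  have : Nonempty (Fin d) := ⟨i₀⟩
  obtain ⟨i, hi⟩ := Finite.exists_max fun i => |(p i : ℝ)|
  have hone : 1 ≤ |(p i : ℝ)| := le_trans (mod_cast Int.one_le_abs hi₀) (hi i₀)
  exact ⟨i, (jb_le_one_add_mul (abs_nonneg _) hi).trans (by linarith)⟩

section Derivatives

variable {a : Sym d} {N : ℕ}

theorem pdx_eq_fderiv_uncurry (ha : Differentiable ℝ (Function.uncurry a)) (j : Fin d)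
    (x ξ : Vec d) : pdx j a x ξ = fderiv ℝ (Function.uncurry a) (x, ξ) (Pi.single j 1, 0) := by
  have h : HasFDerivAt (fun y => a y ξ) ((fderiv ℝ (Function.uncurry a) (x, ξ)).comp
      (ContinuousLinearMap.inl ℝ (Vec d) (Vec d))) x :=
    HasFDerivAt.comp (f := fun y => (y, ξ)) (g := Function.uncurry a) x (ha (x, ξ)).hasFDerivAt
      (hasFDerivAt_prodMk_left x ξ)
  simp [pdx, h.fderiv]

theorem pdxi_eq_fderiv_uncurry (ha : Differentiable ℝ (Function.uncurry a)) (j : Fin d)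
    (x ξ : Vec d) : pdxi j a x ξ = fderiv ℝ (Function.uncurry a) (x, ξ) (0, Pi.single j 1) := by
  have h : HasFDerivAt (fun η => a x η) ((fderiv ℝ (Function.uncurry a) (x, ξ)).comp
      (ContinuousLinearMap.inr ℝ (Vec d) (Vec d))) ξ :=
    HasFDerivAt.comp (f := fun η => (x, η)) (g := Function.uncurry a) ξ (ha (x, ξ)).hasFDerivAt
      (hasFDerivAt_prodMk_right x ξ)
  simp [pdxi, h.fderiv]

theorem contDiff_pdx (ha : ContDiff ℝ (N + 1 : ℕ) (Function.uncurry a)) (j : Fin d) :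
    ContDiff ℝ N (Function.uncurry (pdx j a)) := by
  rw [show Function.uncurry (pdx j a) =
      fun z => fderiv ℝ (Function.uncurry a) z (Pi.single j 1, 0) from
    funext fun z => pdx_eq_fderiv_uncurry (ha.differentiable (by simp)) j z.1 z.2]
  exact (ha.fderiv_right (m := N) (by norm_cast)).clm_apply contDiff_const

theorem contDiff_pdxi (ha : ContDiff ℝ (N + 1 : ℕ) (Function.uncurry a)) (j : Fin d) :
    ContDiff ℝ N (Function.uncurry (pdxi j a)) := by
  rw [show Function.uncurry (pdxi j a) =
      fun z => fderiv ℝ (Function.uncurry a) z (0, Pi.single j 1) from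
    funext fun z => pdxi_eq_fderiv_uncurry (ha.differentiable (by simp)) j z.1 z.2]
  exact (ha.fderiv_right (m := N) (by norm_cast)).clm_apply contDiff_const

theorem xPeriodic_pdx (ha : XPeriodic a) (j : Fin d) : XPeriodic (pdx j a) := by
  intro ξ x n
  have hshift : (fun y => a y ξ) = fun y => a (y + fun i => 2 * π * (n i : ℝ)) ξ :=
    funext fun y => (ha ξ y n).symm
  have h := fderiv_comp_add_right (𝕜 := ℝ) (f := fun y => a y ξ) (x := x)
    (fun i => 2 * π * (n i : ℝ))
  rw [← hshift] at h
  exact (DFunLike.congr_fun h (Pi.single j 1)).symm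

theorem xPeriodic_pdxi (ha : XPeriodic a) (j : Fin d) : XPeriodic (pdxi j a) := by
  intro ξ x n
  change fderiv ℝ (fun η => a _ η) ξ _ = fderiv ℝ (fun η => a x η) ξ _
  rw [show (fun η => a (fun i => x i + 2 * π * (n i : ℝ)) η) = fun η => a x η from
    funext fun η => ha η x n]

theorem contDiff_mderiv (ha : ContDiff ℝ N (Function.uncurry a)) {L : List (Fin d ⊕ Fin d)}
    {n : ℕ} (h : L.length + n ≤ N) : ContDiff ℝ n (Function.uncurry (mderiv L a)) := by
  induction L generalizing n with
  | nil => exact ha.of_le (by simpa using h)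
  | cons i L ih =>
    have hL : ContDiff ℝ (n + 1 : ℕ) (Function.uncurry (mderiv L a)) :=
      ih (by rw [List.length_cons] at h; omega)
    cases i with
    | inl j => exact contDiff_pdx hL j
    | inr j => exact contDiff_pdxi hL j

theorem xPeriodic_mderiv (ha : XPeriodic a) (L : List (Fin d ⊕ Fin d)) :
    XPeriodic (mderiv L a) := by
  induction L with
  | nil => exact ha
  | cons i L ih =>
    cases i with
    | inl j => exact xPeriodic_pdx ih j
    | inr j => exact xPeriodic_pdxi ih j

theorem symCoeff_pdx (ha : ContDiff ℝ 1 (Function.uncurry a)) (hp : XPeriodic a) (j : Fin d)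
    (p : Zd d) (ξ : Vec d) :
    symCoeff (pdx j a) p ξ = Complex.I * (p j : ℂ) * symCoeff a p ξ :=
  fCoeff_pdF j (u := fun x => a x ξ) (ha.comp (contDiff_prodMk_left ξ)) (hp ξ) p

theorem hasDerivAt_symbol_line (ha : Differentiable ℝ (Function.uncurry a)) (x ξ v : Vec d)
    (t : ℝ) : HasDerivAt (fun τ : ℝ => a x (ξ + τ • v))
      (∑ i, (v i : ℂ) * pdxi i a x (ξ + t • v)) t := by
  have hline : HasDerivAt (fun τ : ℝ => ξ + τ • v) v t := by
    simpa using ((hasDerivAt_id t).smul_const v).const_add ξ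
  have hfd : DifferentiableAt ℝ (fun η => a x η) (ξ + t • v) :=
    (ha _).comp (ξ + t • v) (hasFDerivAt_prodMk_right x (ξ + t • v)).differentiableAt
  refine (hfd.hasFDerivAt.comp_hasDerivAt t hline).congr_deriv ?_
  conv_lhs => rw [pi_eq_sum_univ' v, map_sum]
  simp only [map_smul, pdxi, Complex.real_smul, ← pi_eq_sum_univ' v]

theorem hasDerivAt_symCoeff_line (ha : ContDiff ℝ 1 (Function.uncurry a)) (p : Zd d)
    (ξ v : Vec d) (t : ℝ) : HasDerivAt (fun τ : ℝ => symCoeff a p (ξ + τ • v))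
      (∑ i, (v i : ℂ) * symCoeff (pdxi i a) p (ξ + t • v)) t := by
  have hpdxi (i : Fin d) : Continuous (Function.uncurry (pdxi i a)) :=
    (contDiff_pdxi (N := 0) (by simpa using ha) i).continuous
  have hline : Continuous fun z : ℝ × Vec d => (z.2, ξ + z.1 • v) := by fun_prop
  have hslice (t : ℝ) : Continuous fun x : Vec d => (x, ξ + t • v) := by fun_prop
  have hF' : Continuous (Function.uncurry fun (t : ℝ) x =>
      ∑ i, (v i : ℂ) * pdxi i a x (ξ + t • v)) :=
    continuous_finsetSum _ fun i _ => continuous_const.mul ((hpdxi i).comp hline)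
  refine (hasDerivAt_fCoeff (F := fun t x => a x (ξ + t • v)) (fun t =>
    ha.continuous.comp (hslice t)) hF' (fun t x => hasDerivAt_symbol_line
      (ha.differentiable one_ne_zero) x ξ v t) p t).congr_deriv ?_
  rw [fCoeff_sum (u := fun i x => (v i : ℂ) * pdxi i a x (ξ + t • v)) _
    fun i _ => continuous_const.mul ((hpdxi i).comp (hslice t))]
  exact Finset.sum_congr rfl fun i _ => fCoeff_const_mul _ _ _

end Derivatives

section Decay

variable {a : Sym d} {m : ℝ} {N : ℕ}

theorem symNorm_nonneg (m : ℝ) (N : ℕ) (a : Sym d) : 0 ≤ symNorm m N a := by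
  refine Real.sSup_nonneg ?_
  rintro r ⟨L, x, ξ, _, rfl⟩
  have := jbR_pos ξ
  positivity

theorem InSymClass.contDiff (ha : InSymClass m N a) : ContDiff ℝ N (Function.uncurry a) :=
  mod_cast ha.1

theorem InSymClass.norm_mderiv_le (ha : InSymClass m N a) {L : List (Fin d ⊕ Fin d)}
    (hL : L.length ≤ N) (x ξ : Vec d) :
    ‖mderiv L a x ξ‖ ≤ symNorm m N a * jbR ξ ^ (m - (nXi L : ℝ)) := by
  have h : jbR ξ ^ (-m + (nXi L : ℝ)) * ‖mderiv L a x ξ‖ ≤ symNorm m N a :=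
    le_csSup ha.2.2 ⟨L, x, ξ, hL, rfl⟩
  rwa [show m - (nXi L : ℝ) = -(-m + nXi L) by ring, Real.rpow_neg (jbR_pos ξ).le,
    ← div_eq_mul_inv, le_div_iff₀ (Real.rpow_pos_of_pos (jbR_pos ξ) _), mul_comm]

theorem nXi_replicate_inl_append (n : ℕ) (i : Fin d) (L : List (Fin d ⊕ Fin d)) :
    nXi (List.replicate n (Sum.inl i) ++ L) = nXi L := by
  simp [nXi, List.filter_append]

theorem nXi_cons_inr (i : Fin d) (L : List (Fin d ⊕ Fin d)) :
    nXi (Sum.inr i :: L) = nXi L + 1 := rfl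

theorem symCoeff_mderiv_replicate_inl (ha : ContDiff ℝ N (Function.uncurry a))
    (hp : XPeriodic a) {L : List (Fin d ⊕ Fin d)} {n : ℕ} (hL : L.length + n ≤ N) (i : Fin d)
    (p : Zd d) (ξ : Vec d) : symCoeff (mderiv (List.replicate n (Sum.inl i) ++ L) a) p ξ =
      (Complex.I * (p i : ℂ)) ^ n * symCoeff (mderiv L a) p ξ := by
  induction n with
  | zero => simp
  | succ n ih =>
    have hcd : ContDiff ℝ (1 : ℕ)
        (Function.uncurry (mderiv (List.replicate n (Sum.inl i) ++ L) a)) :=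
      contDiff_mderiv ha (by simp only [List.length_append, List.length_replicate]; omega)
    change symCoeff (pdx i (mderiv (List.replicate n (Sum.inl i) ++ L) a)) p ξ = _
    rw [symCoeff_pdx (by exact_mod_cast hcd) (xPeriodic_mderiv hp _), ih (by omega)]
    ring

/-- `n` integrations by parts in the direction of the largest component of `p`. -/
theorem InSymClass.jb_pow_mul_norm_symCoeff_le (ha : InSymClass m N a)
    {L : List (Fin d ⊕ Fin d)} {n : ℕ} (hL : L.length + n ≤ N) (p : Zd d) (ξ : Vec d) :
    jb p ^ n * ‖symCoeff (mderiv L a) p ξ‖ ≤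
      (1 + d) ^ n * (fCoeffBound d * (symNorm m N a * jbR ξ ^ (m - (nXi L : ℝ)))) := by
  rcases eq_or_ne p 0 with rfl | hp
  · have h : ‖symCoeff (mderiv L a) 0 ξ‖ ≤ _ :=
      norm_fCoeff_le (fun x => ha.norm_mderiv_le (by omega) x ξ) 0
    have hone : jb (0 : Zd d) ^ n = 1 := by simp [jb]
    rw [hone, one_mul]
    exact h.trans (le_mul_of_one_le_left ((norm_nonneg _).trans h) (one_le_pow₀ (by simp)))
  · obtain ⟨i, hi⟩ := exists_jb_le_mul_abs hp
    have h : ‖symCoeff (mderiv (List.replicate n (Sum.inl i) ++ L) a) p ξ‖ ≤ _ :=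
      norm_fCoeff_le (fun x => ha.norm_mderiv_le
        (by simp only [List.length_append, List.length_replicate]; omega) x ξ) p
    rw [symCoeff_mderiv_replicate_inl ha.contDiff ha.2.1 hL, nXi_replicate_inl_append, norm_mul,
      norm_pow, norm_mul, Complex.norm_I, one_mul, Complex.norm_intCast] at h
    have := (jb_pos p).le
    calc jb p ^ n * ‖symCoeff (mderiv L a) p ξ‖
        ≤ ((1 + d) * |(p i : ℝ)|) ^ n * ‖symCoeff (mderiv L a) p ξ‖ := by gcongr
      _ = (1 + d) ^ n * (|(p i : ℝ)| ^ n * ‖symCoeff (mderiv L a) p ξ‖) := by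
          rw [mul_pow, mul_assoc]
      _ ≤ _ := by gcongr

theorem InSymClass.norm_symCoeff_le (ha : InSymClass m N a)
    {L : List (Fin d ⊕ Fin d)} {n : ℕ} (hL : L.length + n ≤ N) (p : Zd d) (ξ : Vec d) :
    ‖symCoeff (mderiv L a) p ξ‖ ≤
      (1 + d) ^ n * fCoeffBound d * symNorm m N a * jbR ξ ^ (m - (nXi L : ℝ)) *
        (jb p)⁻¹ ^ n := by
  rw [inv_pow, ← div_eq_mul_inv, le_div_iff₀ (pow_pos (jb_pos p) n), mul_comm]
  simpa only [mul_assoc] using ha.jb_pow_mul_norm_symCoeff_le hL p ξ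

theorem summable_inv_jb_pow {n : ℕ} (hn : d < n) : Summable fun p : Zd d => (jb p)⁻¹ ^ n := by
  let Λ : Submodule ℤ (Vec d) := Submodule.span ℤ (Set.range (Pi.basisFun ℝ (Fin d)))
  have hmem (p : Zd d) : (fun i => (p i : ℝ)) ∈ Λ := by
    rw [show (fun i => (p i : ℝ)) = ∑ i, p i • Pi.basisFun ℝ (Fin d) i by
      ext k; simp [Finset.sum_apply, Pi.single_apply]]
    exact Submodule.sum_mem _ fun i _ => Submodule.smul_mem _ _ (Submodule.subset_span ⟨i, rfl⟩)
  have hrank : Module.finrank ℤ Λ = d := by simpa using ZLattice.rank ℝ Λ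
  have hinj : Function.Injective fun p : Zd d => (⟨fun i => (p i : ℝ), hmem p⟩ : Λ) := by
    intro p q hpq
    ext i
    simpa using congrFun (Subtype.ext_iff.1 hpq) i
  have hsum := (ZLattice.summable_norm_rpow Λ (-(n : ℝ))
    (by rw [hrank]; exact neg_lt_neg (by exact_mod_cast hn))).comp_injective hinj
  refine Summable.of_norm_bounded_eventually hsum ?_
  filter_upwards [(Set.finite_singleton (0 : Zd d)).compl_mem_cofinite] with p hp
  have hpos : 0 < ‖(fun i => (p i : ℝ) : Vec d)‖ :=
    norm_pos_iff.2 fun h => hp (funext fun i => by simpa using congrFun h i)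
  have hle : ‖(fun i => (p i : ℝ) : Vec d)‖ ≤ jb p :=
    (pi_norm_le_iff_of_nonneg (jb_pos p).le).2 fun i => abs_le_jb p i
  have := jb_pos p
  rw [Real.norm_of_nonneg (by positivity), Function.comp_apply, Submodule.coe_norm,
    Real.rpow_neg hpos.le, Real.rpow_natCast, inv_pow]
  gcongr

theorem InSymClass.summable_symCoeff (ha : InSymClass m N a) {L : List (Fin d ⊕ Fin d)}
    (hL : L.length + (d + 1) ≤ N) (ξ : Vec d) :
    Summable fun p => symCoeff (mderiv L a) p ξ :=
  Summable.of_norm_bounded ((summable_inv_jb_pow d.lt_succ_self).mul_left _)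
    fun p => ha.norm_symCoeff_le hL p ξ

/-- `(v·∂_ξ)^r ∂^L â(p, ξ)`, the iterated derivative in the direction `v` of the `p`-th Fourier
coefficient of `∂^L a`, expanded in the partial derivatives of `a`. -/
def symCoeffDeriv (a : Sym d) (p : Zd d) (v : Vec d) : ℕ → List (Fin d ⊕ Fin d) → Vec d → ℂ
  | 0, L, ξ => symCoeff (mderiv L a) p ξ
  | r + 1, L, ξ => ∑ i, (v i : ℂ) * symCoeffDeriv a p v r (Sum.inr i :: L) ξ

theorem hasDerivAt_symCoeffDeriv (ha : ContDiff ℝ N (Function.uncurry a)) (p : Zd d)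
    (ξ v : Vec d) (t : ℝ) {r : ℕ} {L : List (Fin d ⊕ Fin d)} (h : L.length + r + 1 ≤ N) :
    HasDerivAt (fun τ : ℝ => symCoeffDeriv a p v r L (ξ + τ • v))
      (symCoeffDeriv a p v (r + 1) L (ξ + t • v)) t := by
  induction r generalizing L with
  | zero =>
    exact hasDerivAt_symCoeff_line (by exact_mod_cast contDiff_mderiv ha (n := 1) h) p ξ v t
  | succ r ih =>
    exact HasDerivAt.fun_sum fun i _ =>
      (ih (L := Sum.inr i :: L) (by rw [List.length_cons]; omega)).const_mul (v i : ℂ)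

theorem norm_symCoeffDeriv_le {p : Zd d} {v ξ : Vec d} {n : ℕ} {B : ℕ → ℝ}
    (hB : ∀ L : List (Fin d ⊕ Fin d), L.length + n ≤ N →
      ‖symCoeff (mderiv L a) p ξ‖ ≤ B (nXi L)) {r : ℕ} {L : List (Fin d ⊕ Fin d)}
    (h : L.length + r + n ≤ N) :
    ‖symCoeffDeriv a p v r L ξ‖ ≤ (∑ i, |v i|) ^ r * B (nXi L + r) := by
  induction r generalizing L with
  | zero => simpa [symCoeffDeriv] using hB L h
  | succ r ih =>
    rw [pow_succ', mul_assoc, Finset.sum_mul]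
    refine norm_sum_le_of_le _ fun i _ => ?_
    rw [norm_mul, Complex.norm_real, Real.norm_eq_abs]
    have hi := ih (L := Sum.inr i :: L) (by rw [List.length_cons]; omega)
    rw [nXi_cons_inr, add_right_comm, add_assoc] at hi
    gcongr

theorem InSymClass.norm_symCoeffDeriv_le (ha : InSymClass m N a) (p q : Zd d) (ξ : Vec d)
    {v : Vec d} (hv : ∀ i, |v i| ≤ jb q) {r : ℕ} (hr : r ≤ N) :
    ‖symCoeffDeriv a p v r [] ξ‖ ≤ (1 + d) ^ N * fCoeffBound d * symNorm m N a *
      (jb q ^ r * (jb p)⁻¹ ^ (N - r) * jbR ξ ^ (m - (r : ℝ))) := by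
  have h := QLNLS.norm_symCoeffDeriv_le (v := v) (B := fun k => (1 + d) ^ (N - r) *
    fCoeffBound d * symNorm m N a * jbR ξ ^ (m - (k : ℝ)) * (jb p)⁻¹ ^ (N - r))
    (fun L hL => ha.norm_symCoeff_le hL p ξ) (r := r) (L := []) (by simp; omega)
  rw [show nXi ([] : List (Fin d ⊕ Fin d)) + r = r from Nat.zero_add r] at h
  have hsum : ∑ i, |v i| ≤ (1 + d) * jb q := by
    have : ∑ i, |v i| ≤ d * jb q := by
      simpa using Finset.sum_le_sum fun i (_ : i ∈ Finset.univ) => hv i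
    linarith [jb_pos q]
  have hS := symNorm_nonneg m N a
  have hK := fCoeffBound_nonneg (d := d)
  have hp := jb_pos p
  have hξ := jbR_pos ξ
  calc ‖symCoeffDeriv a p v r [] ξ‖
      ≤ ((1 + d) * jb q) ^ r * ((1 + d) ^ (N - r) * fCoeffBound d * symNorm m N a *
          jbR ξ ^ (m - (r : ℝ)) * (jb p)⁻¹ ^ (N - r)) := h.trans (by gcongr)
    _ = (1 + d) ^ (N - r + r) * fCoeffBound d * symNorm m N a *
          (jb q ^ r * (jb p)⁻¹ ^ (N - r) * jbR ξ ^ (m - (r : ℝ))) := by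
        rw [mul_pow, pow_add]; ring
    _ = _ := by rw [Nat.sub_add_cancel hr]

end Decay

/-! ### Taylor expansion along a segment -/

section Taylor

variable {E : Type*} [NormedAddCommGroup E] [NormedSpace ℝ E]

theorem norm_sub_taylor_le {n : ℕ} {f : ℕ → ℝ → E} {C : ℝ}
    (hf : ∀ r < n, ∀ t, HasDerivAt (f r) (f (r + 1) t) t)
    (hC : ∀ t ∈ Set.Icc (0 : ℝ) 1, ‖f n t‖ ≤ C) {t : ℝ} (ht : t ∈ Set.Icc (0 : ℝ) 1) :
    ‖f 0 t - ∑ r ∈ Finset.range n, (t ^ r / r.factorial) • f r 0‖ ≤ C := by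
  induction n generalizing f t with
  | zero => simpa using hC t ht
  | succ n ih =>
    have hpow (r : ℕ) (τ : ℝ) : HasDerivAt
        (fun τ : ℝ => (τ ^ (r + 1) / (r + 1).factorial) • f (r + 1) 0)
        ((τ ^ r / r.factorial) • f (r + 1) 0) τ := by
      refine (((hasDerivAt_pow (r + 1) τ).div_const _).smul_const _).congr_deriv ?_
      rw [Nat.factorial_succ, Nat.cast_mul, Nat.add_sub_cancel,
        mul_div_mul_left _ _ (by positivity)]
    have hderiv (τ : ℝ) : HasDerivAt
        (fun τ => f 0 τ - ∑ r ∈ Finset.range n, (τ ^ (r + 1) / (r + 1).factorial) • f (r + 1) 0)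
        (f 1 τ - ∑ r ∈ Finset.range n, (τ ^ r / r.factorial) • f (r + 1) 0) τ :=
      (hf 0 n.succ_pos τ).sub (HasDerivAt.fun_sum fun r _ => hpow r τ)
    have hbound (τ : ℝ) (hτ : τ ∈ Set.Icc (0 : ℝ) 1) :
        ‖f 1 τ - ∑ r ∈ Finset.range n, (τ ^ r / r.factorial) • f (r + 1) 0‖ ≤ C :=
      ih (f := fun r => f (r + 1)) (fun r hr => hf (r + 1) (by omega)) hC hτ
    have hmvt := norm_image_sub_le_of_norm_deriv_le_segment'
      (fun τ _ => (hderiv τ).hasDerivWithinAt)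
      (fun τ hτ => hbound τ (Set.Ico_subset_Icc_self hτ)) t ht
    have hC0 : 0 ≤ C := (norm_nonneg _).trans (hbound t ht)
    rw [Finset.sum_range_succ']
    simp only [zero_pow (Nat.succ_ne_zero _), zero_div, zero_smul, Finset.sum_const_zero,
      sub_zero] at hmvt
    calc _ ≤ C * t := by simpa [sub_sub] using hmvt
      _ ≤ C := mul_le_of_le_one_right hC0 ht.2

end Taylor

section Leibniz

variable {R : Type*} [NormedRing R]

/-- The `r`-th derivative of a product, expanded by the Leibniz rule; `A i` and `B i` stand for
the `i`-th derivatives of the two factors. -/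
def leibniz (A B : ℕ → R) (r : ℕ) : R :=
  ∑ ij ∈ Finset.HasAntidiagonal.antidiagonal r, r.choose ij.1 • (A ij.1 * B ij.2)

theorem hasDerivAt_leibniz [NormedAlgebra ℝ R] {A B : ℕ → ℝ → R} {r : ℕ} {t : ℝ}
    (hA : ∀ i ≤ r, HasDerivAt (A i) (A (i + 1) t) t)
    (hB : ∀ i ≤ r, HasDerivAt (B i) (B (i + 1) t) t) :
    HasDerivAt (fun τ => leibniz (fun i => A i τ) (fun i => B i τ) r)
      (leibniz (fun i => A i t) (fun i => B i t) (r + 1)) t := by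
  refine (HasDerivAt.fun_sum (A' := fun ij => r.choose ij.1 •
    (A (ij.1 + 1) t * B ij.2 t + A ij.1 t * B (ij.2 + 1) t)) fun ij hij => ?_).congr_deriv ?_
  · have hr := Finset.HasAntidiagonal.mem_antidiagonal.1 hij
    exact ((hA ij.1 (by omega)).mul (hB ij.2 (by omega))).fun_const_smul (r.choose ij.1)
  · rw [leibniz, Finset.sum_antidiagonal_choose_succ_nsmul fun i j => A i t * B j t,
      ← Finset.sum_add_distrib]
    refine Finset.sum_congr rfl fun ij hij => ?_
    have hr := Finset.HasAntidiagonal.mem_antidiagonal.1 hij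
    rw [smul_add, add_comm, Nat.choose_symm_of_eq_add hr.symm]

theorem norm_leibniz_le {A B : ℕ → R} {r : ℕ} {C : ℝ}
    (h : ∀ i j, i + j = r → ‖A i‖ * ‖B j‖ ≤ C) : ‖leibniz A B r‖ ≤ 2 ^ r * C := by
  calc ‖leibniz A B r‖
      ≤ ∑ ij ∈ Finset.HasAntidiagonal.antidiagonal r, (r.choose ij.1 : ℝ) * C := by
        refine norm_sum_le_of_le _ fun ij hij => norm_nsmul_le.trans ?_
        gcongr
        exact (norm_mul_le _ _).trans (h _ _ (Finset.HasAntidiagonal.mem_antidiagonal.1 hij))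
    _ = 2 ^ r * C := by
        rw [← Finset.sum_mul, Finset.Nat.sum_antidiagonal_eq_sum_range_succ_mk]
        exact_mod_cast congrArg (fun n : ℕ => (n : ℝ) * C) (Nat.sum_range_choose r)

end Leibniz

/-! ### Frequency geometry of the cut-off -/

/-- The positive reals `x` and `y` agree up to a factor `A`. -/
def Comparable (A x y : ℝ) : Prop := x ≤ A * y ∧ y ≤ A * x

theorem Comparable.symm {A x y : ℝ} (h : Comparable A x y) : Comparable A y x := ⟨h.2, h.1⟩

theorem Comparable.trans {A B x y z : ℝ} (hA : 0 ≤ A) (hB : 0 ≤ B) (hxy : Comparable A x y)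
    (hyz : Comparable B y z) : Comparable (A * B) x z := by
  constructor
  · calc x ≤ A * y := hxy.1
      _ ≤ A * (B * z) := by gcongr; exact hyz.1
      _ = A * B * z := by ring
  · calc z ≤ B * y := hyz.2
      _ ≤ B * (A * x) := by gcongr; exact hxy.2
      _ = A * B * x := by ring

theorem Comparable.mono {A B x y : ℝ} (hx : 0 ≤ x) (hy : 0 ≤ y) (hAB : A ≤ B)
    (h : Comparable A x y) : Comparable B x y :=
  ⟨h.1.trans (by gcongr), h.2.trans (by gcongr)⟩

theorem Comparable.rpow_le {A x y : ℝ} (hA : 0 < A) (hx : 0 < x) (hy : 0 < y)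
    (h : Comparable A x y) (σ : ℝ) : x ^ σ ≤ A ^ |σ| * y ^ σ := by
  rcases le_total 0 σ with hσ | hσ
  · rw [abs_of_nonneg hσ, ← Real.mul_rpow hA.le hy.le]
    exact Real.rpow_le_rpow hx.le h.1 hσ
  · rw [abs_of_nonpos hσ, Real.rpow_neg hA.le, ← Real.inv_rpow hA.le,
      ← Real.mul_rpow (by positivity) hy.le]
    exact Real.rpow_le_rpow_of_nonpos (by positivity) ((inv_mul_le_iff₀ hA).2 h.2) hσ

/-- The inclusion of the frequency lattice `ℤ^d` into `ℝ^d`. -/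
def toVec : Zd d →+ Vec d := (Int.castAddHom ℝ).compLeft (Fin d)

theorem znorm_eq_rnorm (p : Zd d) : znorm p = rnorm (toVec p) := rfl

theorem jb_eq_jbR (p : Zd d) : jb p = jbR (toVec p) := rfl

theorem abs_toVec_le (p : Zd d) (i : Fin d) : |toVec p i| ≤ jb p := abs_le_jb p i

theorem two_smul_mid (j k : Zd d) : (2 : ℝ) • mid j k = toVec (j + k) := by
  ext i
  simp [mid, toVec, mul_div_cancel₀]

theorem rnorm_eq_norm (ξ : Vec d) :
    rnorm ξ = ‖(WithLp.toLp 2 ξ : EuclideanSpace ℝ (Fin d))‖ := by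
  simp [rnorm, EuclideanSpace.norm_eq]

theorem rnorm_nonneg (ξ : Vec d) : 0 ≤ rnorm ξ := Real.sqrt_nonneg _

theorem rnorm_add_le (ξ η : Vec d) : rnorm (ξ + η) ≤ rnorm ξ + rnorm η := by
  simpa only [rnorm_eq_norm, WithLp.toLp_add] using norm_add_le _ _

theorem rnorm_sub_le (ξ η : Vec d) : rnorm (ξ - η) ≤ rnorm ξ + rnorm η := by
  simpa only [rnorm_eq_norm, WithLp.toLp_sub] using norm_sub_le _ _

theorem rnorm_smul (t : ℝ) (ξ : Vec d) : rnorm (t • ξ) = |t| * rnorm ξ := by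
  simp only [rnorm_eq_norm, WithLp.toLp_smul, norm_smul, Real.norm_eq_abs]

theorem rnorm_le_jbR (ξ : Vec d) : rnorm ξ ≤ jbR ξ :=
  Real.sqrt_le_sqrt (le_add_of_nonneg_left zero_le_one)

theorem jbR_le_one_add_rnorm (ξ : Vec d) : jbR ξ ≤ 1 + rnorm ξ := by
  have h := rnorm_nonneg ξ
  have hsq : rnorm ξ ^ 2 = ∑ i, ξ i ^ 2 := Real.sq_sqrt (Finset.sum_nonneg fun i _ => sq_nonneg _)
  exact Real.sqrt_le_iff.2 ⟨by linarith, by nlinarith⟩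

theorem rnorm_toVec_add (j k : Zd d) : rnorm (toVec (j + k)) = 2 * rnorm (mid j k) := by
  rw [← two_smul_mid, rnorm_smul, abs_two]

theorem rnorm_toVec_sub_comm (j k : Zd d) : rnorm (toVec (j - k)) = rnorm (toVec (k - j)) := by
  simp only [map_sub, rnorm_eq_norm, WithLp.toLp_sub, norm_sub_rev]

theorem mid_self (j : Zd d) : mid j j = toVec j := by
  ext i; simp [mid, toVec]

theorem mid_comm (j k : Zd d) : mid j k = mid k j := by
  ext i; simp [mid, add_comm]

theorem mid_add_half_smul (j k l : Zd d) :
    mid j l + (1 / 2 : ℝ) • toVec (k - l) = mid j k := by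
  ext i; simp [mid, toVec]; ring

theorem mid_add_neg_half_smul (j k l : Zd d) :
    mid j l + (-1 / 2 : ℝ) • toVec (j - k) = mid k l := by
  ext i; simp [mid, toVec]; ring

theorem rnorm_mid_le_left (j k l : Zd d) :
    rnorm (mid j k) ≤ rnorm (mid j l) + 1 / 2 * rnorm (toVec (k - l)) := by
  have h := rnorm_add_le (mid j l) ((1 / 2 : ℝ) • toVec (k - l))
  rwa [mid_add_half_smul, rnorm_smul, abs_of_pos one_half_pos] at h

theorem rnorm_mid_le_right (j k l : Zd d) :
    rnorm (mid k l) ≤ rnorm (mid j l) + 1 / 2 * rnorm (toVec (j - k)) := by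
  rw [mid_comm k, mid_comm j, rnorm_toVec_sub_comm]
  exact rnorm_mid_le_left l k j

theorem comparable_jbR_add {ξ v : Vec d} (h : rnorm v ≤ 1 / 3 + 2 / 3 * rnorm ξ) :
    Comparable 5 (jbR (ξ + v)) (jbR ξ) := by
  have hadd := rnorm_add_le ξ v
  have hsub := rnorm_sub_le (ξ + v) v
  rw [add_sub_cancel_right] at hsub
  have := jbR_le_one_add_rnorm ξ
  have := jbR_le_one_add_rnorm (ξ + v)
  have := rnorm_le_jbR ξ
  have := rnorm_le_jbR (ξ + v)
  have := one_le_jbR ξ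
  have := one_le_jbR (ξ + v)
  constructor <;> linarith

theorem comparable_jbR_add_smul {ξ v : Vec d} {θ : ℝ} (hθ : |θ| ≤ 1 / 2)
    (hv : rnorm v ≤ 2 / 3 * (1 + 2 * rnorm ξ)) : Comparable 5 (jbR (ξ + θ • v)) (jbR ξ) := by
  refine comparable_jbR_add ?_
  rw [rnorm_smul]
  calc |θ| * rnorm v ≤ 1 / 2 * (2 / 3 * (1 + 2 * rnorm ξ)) := by
        have := rnorm_nonneg v
        gcongr
    _ = _ := by ring

theorem comparable_jbR_mid_left {j k l : Zd d}
    (h : rnorm (toVec (k - l)) ≤ 2 / 3 * (1 + 2 * rnorm (mid j l))) :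
    Comparable 5 (jbR (mid j k)) (jbR (mid j l)) := by
  simpa only [mid_add_half_smul] using
    comparable_jbR_add_smul (θ := 1 / 2) (by norm_num [abs_div]) h

theorem comparable_jbR_mid_right {j k l : Zd d}
    (h : rnorm (toVec (j - k)) ≤ 2 / 3 * (1 + 2 * rnorm (mid j l))) :
    Comparable 5 (jbR (mid k l)) (jbR (mid j l)) := by
  simpa only [mid_add_neg_half_smul] using
    comparable_jbR_add_smul (θ := -1 / 2) (by norm_num [abs_div]) h

/-- A cut-off profile as in `IsCutoff`, of arbitrary regularity. -/
structure IsRoughCutoff (χ : ℝ → ℝ) : Prop where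
  mem : ∀ t, χ t ∈ Set.Icc (0 : ℝ) 1
  eq_one : ∀ t, |t| ≤ 5 / 4 → χ t = 1
  eq_zero : ∀ t, 8 / 5 ≤ |t| → χ t = 0

theorem IsCutoff.isRoughCutoff {χ : ℝ → ℝ} (hχ : IsCutoff χ) : IsRoughCutoff χ :=
  ⟨hχ.mem, hχ.eq_one, hχ.eq_zero⟩

section Cutoff

variable {χ : ℝ → ℝ} {ε : ℝ} {j k l : Zd d}

theorem IsRoughCutoff.rnorm_sub_le_of_cutFactor_ne_zero (hχ : IsRoughCutoff χ) (hε₀ : 0 < ε)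
    (hε₁ : ε < 1 / 4) (h : cutFactor χ ε j k ≠ 0) :
    rnorm (toVec (j - k)) ≤ 2 / 5 * (1 + 2 * rnorm (mid j k)) := by
  have hlt : |znorm (j - k) / (ε * jb (j + k))| < 8 / 5 :=
    not_le.1 fun hle => h (hχ.eq_zero _ hle)
  have hpos := mul_pos hε₀ (jb_pos (j + k))
  rw [abs_div, abs_of_pos hpos, div_lt_iff₀ hpos] at hlt
  calc rnorm (toVec (j - k)) ≤ 8 / 5 * (ε * jb (j + k)) := (le_abs_self _).trans hlt.le
    _ ≤ 8 / 5 * (1 / 4 * jb (j + k)) := by have := jb_pos (j + k); gcongr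
    _ = 2 / 5 * jbR (toVec (j + k)) := by rw [jb_eq_jbR]; ring
    _ ≤ _ := by rw [← rnorm_toVec_add]; gcongr; exact jbR_le_one_add_rnorm _

theorem IsRoughCutoff.mul_rnorm_mid_le_of_cutFactor_ne_one (hχ : IsRoughCutoff χ) (hε₀ : 0 < ε)
    (h : cutFactor χ ε j k ≠ 1) : ε * (2 * rnorm (mid j k)) ≤ rnorm (toVec (j - k)) := by
  have hlt : 5 / 4 < |znorm (j - k) / (ε * jb (j + k))| :=
    not_le.1 fun hle => h (hχ.eq_one _ hle)
  have hpos := mul_pos hε₀ (jb_pos (j + k))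
  rw [abs_div, abs_of_pos hpos, lt_div_iff₀ hpos, znorm_eq_rnorm,
    abs_of_nonneg (rnorm_nonneg _)] at hlt
  calc ε * (2 * rnorm (mid j k)) ≤ ε * jb (j + k) := by
        rw [← rnorm_toVec_add]; gcongr; exact rnorm_le_jbR _
    _ ≤ _ := by linarith

theorem IsRoughCutoff.comparable_jb_mid (hχ : IsRoughCutoff χ) (hε₀ : 0 < ε) (hε₁ : ε < 1 / 4)
    (h : cutFactor χ ε j k ≠ 0) :
    Comparable 5 (jb j) (jbR (mid j k)) ∧ Comparable 5 (jb k) (jbR (mid j k)) := by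
  have hle : rnorm (toVec (j - k)) ≤ 2 / 3 * (1 + 2 * rnorm (mid j k)) := by
    linarith [hχ.rnorm_sub_le_of_cutFactor_ne_zero hε₀ hε₁ h, rnorm_nonneg (mid j k)]
  rw [jb_eq_jbR, jb_eq_jbR, ← mid_self, ← mid_self]
  exact ⟨comparable_jbR_mid_left hle, comparable_jbR_mid_right hle⟩

theorem IsRoughCutoff.finite_cutFactor_ne_zero (hχ : IsRoughCutoff χ) (hε₀ : 0 < ε)
    (hε₁ : ε < 1 / 4) (j : Zd d) : {k : Zd d | cutFactor χ ε j k ≠ 0}.Finite := by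
  refine (Set.finite_Icc (fun _ : Fin d => -⌈25 * jb j⌉) fun _ => ⌈25 * jb j⌉).subset ?_
  intro k hcut
  obtain ⟨hj, hk⟩ := hχ.comparable_jb_mid hε₀ hε₁ hcut
  have hjk : jb k ≤ 25 * jb j := by linarith [hk.1, hj.2]
  have habs (i : Fin d) : |k i| ≤ ⌈25 * jb j⌉ := by
    exact_mod_cast (abs_le_jb k i).trans (hjk.trans (Int.le_ceil _))
  exact ⟨fun i => (abs_le.1 (habs i)).1, fun i => (abs_le.1 (habs i)).2⟩

/-- The two frequency shifts `j - k` and `k - l` control each other through the cut-offs, so both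
are dominated by the central frequency. -/
theorem IsRoughCutoff.rnorm_shift_le (hχ : IsRoughCutoff χ) (hε₀ : 0 < ε) (hε₁ : ε < 1 / 4)
    (hjk : cutFactor χ ε j k ≠ 0) (hkl : cutFactor χ ε k l ≠ 0) :
    rnorm (toVec (j - k)) ≤ 2 / 3 * (1 + 2 * rnorm (mid j l)) ∧
      rnorm (toVec (k - l)) ≤ 2 / 3 * (1 + 2 * rnorm (mid j l)) := by
  have := hχ.rnorm_sub_le_of_cutFactor_ne_zero hε₀ hε₁ hjk
  have := hχ.rnorm_sub_le_of_cutFactor_ne_zero hε₀ hε₁ hkl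
  have := rnorm_mid_le_left j k l
  have := rnorm_mid_le_right j k l
  constructor <;> linarith

theorem IsRoughCutoff.comparable_jb_mid_of_ne_zero (hχ : IsRoughCutoff χ) (hε₀ : 0 < ε)
    (hε₁ : ε < 1 / 4)
    (h : cutFactor χ ε j k * cutFactor χ ε k l ≠ 0 ∨ cutFactor χ ε j l ≠ 0) :
    Comparable 25 (jb j) (jbR (mid j l)) ∧ Comparable 25 (jb l) (jbR (mid j l)) := by
  rcases h with h | hjl
  · obtain ⟨hjk, hkl⟩ := mul_ne_zero_iff.1 h
    obtain ⟨hp, hq⟩ := hχ.rnorm_shift_le hε₀ hε₁ hjk hkl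
    have hj := (hχ.comparable_jb_mid hε₀ hε₁ hjk).1.trans (by norm_num) (by norm_num)
      (comparable_jbR_mid_left hq)
    have hl := (hχ.comparable_jb_mid hε₀ hε₁ hkl).2.trans (by norm_num) (by norm_num)
      (comparable_jbR_mid_right hp)
    norm_num at hj hl
    exact ⟨hj, hl⟩
  · obtain ⟨hj, hl⟩ := hχ.comparable_jb_mid hε₀ hε₁ hjl
    exact ⟨hj.mono (jb_pos j).le (jbR_pos _).le (by norm_num),
      hl.mono (jb_pos l).le (jbR_pos _).le (by norm_num)⟩

theorem IsRoughCutoff.mul_rnorm_mid_le_of_cutFactor_mul_ne (hχ : IsRoughCutoff χ) (hε₀ : 0 < ε)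
    (hε₁ : ε < 1 / 4) (h : cutFactor χ ε j k * cutFactor χ ε k l ≠ cutFactor χ ε j l) :
    ε * (2 * rnorm (mid j l)) ≤ rnorm (toVec (j - k)) + rnorm (toVec (k - l)) := by
  have hεp : ε * rnorm (toVec (j - k)) ≤ rnorm (toVec (j - k)) :=
    mul_le_of_le_one_left (rnorm_nonneg _) (by linarith)
  have hεq : ε * rnorm (toVec (k - l)) ≤ rnorm (toVec (k - l)) :=
    mul_le_of_le_one_left (rnorm_nonneg _) (by linarith)
  by_cases hjk : cutFactor χ ε j k = 1
  · by_cases hkl : cutFactor χ ε k l = 1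
    · have hjl : cutFactor χ ε j l ≠ 1 := fun hjl => h (by rw [hjk, hkl, hjl, one_mul])
      refine (hχ.mul_rnorm_mid_le_of_cutFactor_ne_one hε₀ hjl).trans ?_
      rw [← sub_add_sub_cancel j k l, map_add]
      exact rnorm_add_le _ _
    · have hle := hχ.mul_rnorm_mid_le_of_cutFactor_ne_one hε₀ hkl
      have htri := mul_le_mul_of_nonneg_left (rnorm_mid_le_right k j l) hε₀.le
      rw [rnorm_toVec_sub_comm k j] at htri
      linarith
  · have hle := hχ.mul_rnorm_mid_le_of_cutFactor_ne_one hε₀ hjk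
    have htri := mul_le_mul_of_nonneg_left (rnorm_mid_le_left j l k) hε₀.le
    rw [rnorm_toVec_sub_comm l k] at htri
    linarith

/-- Where the product of the cut-offs differs from the cut-off of the composition, one of the
three differs from `1`, hence one of the shifts is comparable to the central frequency. -/
theorem IsRoughCutoff.jbR_mid_le_of_cutFactor_mul_ne (hχ : IsRoughCutoff χ) (hε₀ : 0 < ε)
    (hε₁ : ε < 1 / 4) (h : cutFactor χ ε j k * cutFactor χ ε k l ≠ cutFactor χ ε j l) :
    jbR (mid j l) ≤ 2 / ε * (jb (j - k) * jb (k - l)) := by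
  have hkey := hχ.mul_rnorm_mid_le_of_cutFactor_mul_ne hε₀ hε₁ h
  have hp : rnorm (toVec (j - k)) ≤ jb (j - k) := rnorm_le_jbR _
  have hq : rnorm (toVec (k - l)) ≤ jb (k - l) := rnorm_le_jbR _
  have hξ := mul_le_mul_of_nonneg_left (jbR_le_one_add_rnorm (mid j l)) hε₀.le
  rw [div_mul_eq_mul_div, le_div_iff₀ hε₀]
  nlinarith [one_le_jb (j - k), one_le_jb (k - l)]

end Cutoff

/-! ### The kernel of the remainder -/

/-- The `r`-th derivative at `t = 0` of `t ↦ â(p, ξ + tq/2) b̂(q, η - tp/2)`. On `ξ = η` it is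
the contribution of `p` and `q` to the `r`-th term of the Weyl symbolic calculus. -/
def weylTerm (a b : Sym d) (p q : Zd d) (r : ℕ) (ξ η : Vec d) : ℂ :=
  leibniz (fun i => symCoeffDeriv a p ((1 / 2 : ℝ) • toVec q) i [] ξ)
    (fun i => symCoeffDeriv b q ((-1 / 2 : ℝ) • toVec p) i [] η) r

/-- The Taylor polynomial with `ρ` terms of `t ↦ â(p, ξ + tq/2) b̂(q, ξ - tp/2)` at `t = 1`. -/
def weylJet (ρ : ℕ) (a b : Sym d) (p q : Zd d) (ξ : Vec d) : ℂ :=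
  ∑ r ∈ Finset.range ρ, (1 / (r.factorial : ℝ)) • weylTerm a b p q r ξ ξ

/-- The kernel of `T_a ∘ T_b` minus the first `ρ` terms of its symbolic expansion; the output
frequency is `j`, the input frequency `l`, and `k` is the intermediate one. -/
def compKernel (χ : ℝ → ℝ) (ε : ℝ) (ρ : ℕ) (a b : Sym d) (j k l : Zd d) : ℂ :=
  ((cutFactor χ ε j k * cutFactor χ ε k l : ℝ) : ℂ) *
      (symCoeff a (j - k) (mid j k) * symCoeff b (k - l) (mid k l)) -
    ((cutFactor χ ε j l : ℝ) : ℂ) * weylJet ρ a b (j - k) (k - l) (mid j l)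

/-- The size of an `r`-th order term of the symbolic calculus, for symbols of total order `m` and
regularity `N`: each order gains a power of `ξ` and costs a power of decay in the shifts. -/
def weylWeight (N r : ℕ) (m : ℝ) (p q : Zd d) (ξ : Vec d) : ℝ :=
  ((jb p)⁻¹ * (jb q)⁻¹) ^ (N - r) * jbR ξ ^ (m - r)

/-- The constant in the bounds for products of Fourier coefficients of two symbols. -/
def weylConst (d N : ℕ) (m₁ m₂ : ℝ) : ℝ :=
  ((1 + d) ^ N * fCoeffBound d) ^ 2 * 5 ^ (|m₁| + |m₂| + N)

theorem weylWeight_pos (N r : ℕ) (m : ℝ) (p q : Zd d) (ξ : Vec d) :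
    0 < weylWeight N r m p q ξ := by
  have := jb_pos p
  have := jb_pos q
  have := jbR_pos ξ
  unfold weylWeight
  positivity

theorem weylConst_nonneg (d N : ℕ) (m₁ m₂ : ℝ) : 0 ≤ weylConst d N m₁ m₂ := by
  unfold weylConst
  positivity

theorem pow_mul_inv_pow_sub {x : ℝ} (hx : x ≠ 0) {N u v : ℕ} (h : u + v ≤ N) :
    x ^ u * x⁻¹ ^ (N - v) = x⁻¹ ^ (N - (u + v)) := by
  rw [show N - v = u + (N - (u + v)) by omega, pow_add, ← mul_assoc, ← mul_pow,
    mul_inv_cancel₀ hx, one_pow, one_mul]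

theorem jbR_rpow_mul_rpow_le {ξ η₁ η₂ : Vec d} (h₁ : Comparable 5 (jbR η₁) (jbR ξ))
    (h₂ : Comparable 5 (jbR η₂) (jbR ξ)) (m₁ m₂ : ℝ) {i i' N : ℕ} (h : i + i' ≤ N) :
    jbR η₁ ^ (m₁ - i) * jbR η₂ ^ (m₂ - i') ≤
      5 ^ (|m₁| + |m₂| + N) * jbR ξ ^ (m₁ + m₂ - (i + i' : ℕ)) := by
  have hξ := jbR_pos ξ
  have hη₁ := jbR_pos η₁
  have hη₂ := jbR_pos η₂
  have hcast : (i : ℝ) + i' ≤ N := mod_cast h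
  have habs : |m₁ - i| + |m₂ - i'| ≤ |m₁| + |m₂| + N := by
    have hi := abs_sub m₁ (i : ℝ)
    have hi' := abs_sub m₂ (i' : ℝ)
    rw [Nat.abs_cast] at hi hi'
    linarith
  calc jbR η₁ ^ (m₁ - i) * jbR η₂ ^ (m₂ - i')
      ≤ (5 ^ |m₁ - i| * jbR ξ ^ (m₁ - i)) * (5 ^ |m₂ - i'| * jbR ξ ^ (m₂ - i')) := by
        gcongr
        · exact h₁.rpow_le (by norm_num) hη₁ hξ _
        · exact h₂.rpow_le (by norm_num) hη₂ hξ _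
    _ = 5 ^ (|m₁ - i| + |m₂ - i'|) * jbR ξ ^ (m₁ + m₂ - (i + i' : ℕ)) := by
        rw [show m₁ + m₂ - (i + i' : ℕ) = (m₁ - i) + (m₂ - i') by push_cast; ring,
          Real.rpow_add (by norm_num), Real.rpow_add hξ]
        ring
    _ ≤ _ := by
        gcongr
        norm_num

section Bounds

variable {a b : Sym d} {m₁ m₂ : ℝ} {N ρ : ℕ}

theorem norm_symCoeffDeriv_mul_le (ha : InSymClass m₁ N a) (hb : InSymClass m₂ N b)
    (p q : Zd d) {ξ η₁ η₂ : Vec d} (h₁ : Comparable 5 (jbR η₁) (jbR ξ))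
    (h₂ : Comparable 5 (jbR η₂) (jbR ξ)) {i i' : ℕ} (hi : i + i' ≤ N) :
    ‖symCoeffDeriv a p ((1 / 2 : ℝ) • toVec q) i [] η₁‖ *
        ‖symCoeffDeriv b q ((-1 / 2 : ℝ) • toVec p) i' [] η₂‖ ≤
      weylConst d N m₁ m₂ * symNorm m₁ N a * symNorm m₂ N b *
        weylWeight N (i + i') (m₁ + m₂) p q ξ := by
  have hdir {θ : ℝ} (hθ : |θ| ≤ 1) (p : Zd d) (i : Fin d) : |(θ • toVec p) i| ≤ jb p := by
    rw [Pi.smul_apply, smul_eq_mul, abs_mul]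
    exact (mul_le_of_le_one_left (abs_nonneg _) hθ).trans (abs_toVec_le p i)
  have hA := ha.norm_symCoeffDeriv_le p q η₁ (hdir (θ := 1 / 2) (by norm_num [abs_div]) q)
    (show i ≤ N by omega)
  have hB := hb.norm_symCoeffDeriv_le q p η₂ (hdir (θ := -1 / 2) (by norm_num [abs_div]) p)
    (show i' ≤ N by omega)
  have hSa := symNorm_nonneg m₁ N a
  have hSb := symNorm_nonneg m₂ N b
  have hp := jb_pos p
  have hq := jb_pos q
  refine (mul_le_mul hA hB (norm_nonneg _) ((norm_nonneg _).trans hA)).trans ?_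
  calc _ = ((1 + d) ^ N * fCoeffBound d) ^ 2 * symNorm m₁ N a * symNorm m₂ N b *
        ((jb q ^ i * (jb q)⁻¹ ^ (N - i')) * (jb p ^ i' * (jb p)⁻¹ ^ (N - i)) *
          (jbR η₁ ^ (m₁ - i) * jbR η₂ ^ (m₂ - i'))) := by ring
    _ ≤ ((1 + d) ^ N * fCoeffBound d) ^ 2 * symNorm m₁ N a * symNorm m₂ N b *
        ((jb q)⁻¹ ^ (N - (i + i')) * (jb p)⁻¹ ^ (N - (i + i')) *
          (5 ^ (|m₁| + |m₂| + N) * jbR ξ ^ (m₁ + m₂ - (i + i' : ℕ)))) := by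
        rw [pow_mul_inv_pow_sub hq.ne' hi, pow_mul_inv_pow_sub hp.ne' (by omega), add_comm i' i]
        exact mul_le_mul_of_nonneg_left (mul_le_mul_of_nonneg_left
          (jbR_rpow_mul_rpow_le h₁ h₂ m₁ m₂ hi) (by positivity)) (by positivity)
    _ = _ := by rw [weylConst, weylWeight, mul_pow (jb p)⁻¹]; ring

theorem norm_weylTerm_le (ha : InSymClass m₁ N a) (hb : InSymClass m₂ N b) (p q : Zd d)
    {ξ η₁ η₂ : Vec d} (h₁ : Comparable 5 (jbR η₁) (jbR ξ))
    (h₂ : Comparable 5 (jbR η₂) (jbR ξ)) {r : ℕ} (hr : r ≤ N) :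
    ‖weylTerm a b p q r η₁ η₂‖ ≤ 2 ^ r * (weylConst d N m₁ m₂ * symNorm m₁ N a *
      symNorm m₂ N b * weylWeight N r (m₁ + m₂) p q ξ) := by
  refine norm_leibniz_le fun i i' hi => ?_
  rw [← hi]
  exact norm_symCoeffDeriv_mul_le ha hb p q h₁ h₂ (hi.trans_le hr)

theorem hasDerivAt_weylTerm (ha : ContDiff ℝ N (Function.uncurry a))
    (hb : ContDiff ℝ N (Function.uncurry b)) (p q : Zd d) (ξ : Vec d) {r : ℕ} (hr : r < N)
    (t : ℝ) : HasDerivAt (fun t : ℝ => weylTerm a b p q r (ξ + t • (1 / 2 : ℝ) • toVec q)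
        (ξ + t • (-1 / 2 : ℝ) • toVec p))
      (weylTerm a b p q (r + 1) (ξ + t • (1 / 2 : ℝ) • toVec q)
        (ξ + t • (-1 / 2 : ℝ) • toVec p)) t :=
  hasDerivAt_leibniz
    (fun _ hi => hasDerivAt_symCoeffDeriv ha p ξ _ t (by rw [List.length_nil]; omega))
    (fun _ hi => hasDerivAt_symCoeffDeriv hb q ξ _ t (by rw [List.length_nil]; omega))

theorem weylTerm_zero (p q : Zd d) (ξ η : Vec d) :
    weylTerm a b p q 0 ξ η = symCoeff a p ξ * symCoeff b q η := by
  simp [weylTerm, leibniz, symCoeffDeriv, mderiv]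

theorem norm_symCoeff_mul_sub_weylJet_le (ha : InSymClass m₁ N a) (hb : InSymClass m₂ N b)
    (hρ : ρ ≤ N) {j k l : Zd d}
    (hp : rnorm (toVec (j - k)) ≤ 2 / 3 * (1 + 2 * rnorm (mid j l)))
    (hq : rnorm (toVec (k - l)) ≤ 2 / 3 * (1 + 2 * rnorm (mid j l))) :
    ‖symCoeff a (j - k) (mid j k) * symCoeff b (k - l) (mid k l) -
        weylJet ρ a b (j - k) (k - l) (mid j l)‖ ≤
      2 ^ ρ * (weylConst d N m₁ m₂ * symNorm m₁ N a * symNorm m₂ N b *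
        weylWeight N ρ (m₁ + m₂) (j - k) (k - l) (mid j l)) := by
  have hseg {θ t : ℝ} (hθ : |θ| ≤ 1 / 2) (ht : t ∈ Set.Icc (0 : ℝ) 1) : |t * θ| ≤ 1 / 2 := by
    rw [abs_mul, abs_of_nonneg ht.1]
    exact (mul_le_of_le_one_left (abs_nonneg θ) ht.2).trans hθ
  have htaylor := norm_sub_taylor_le
    (f := fun r t => weylTerm a b (j - k) (k - l) r (mid j l + t • (1 / 2 : ℝ) • toVec (k - l))
      (mid j l + t • (-1 / 2 : ℝ) • toVec (j - k)))
    (fun r hr t => hasDerivAt_weylTerm ha.contDiff hb.contDiff _ _ _ (hr.trans_le hρ) t)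
    (fun t ht => norm_weylTerm_le ha hb _ _ (ξ := mid j l)
      (by rw [smul_smul]; exact comparable_jbR_add_smul (hseg (by norm_num [abs_div]) ht) hq)
      (by rw [smul_smul]; exact comparable_jbR_add_smul (hseg (by norm_num [abs_div]) ht) hp) hρ)
    (Set.right_mem_Icc.2 zero_le_one)
  rw [weylJet]
  simpa only [weylTerm_zero, one_smul, zero_smul, add_zero, one_pow, mid_add_half_smul,
    mid_add_neg_half_smul] using htaylor

theorem weylWeight_le {r : ℕ} (hr : r ≤ ρ) (hρ : ρ ≤ N) {A : ℝ} (hA : 1 ≤ A) {p q : Zd d}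
    {ξ : Vec d} (h : jbR ξ ≤ A * (jb p * jb q)) (m : ℝ) :
    weylWeight N r m p q ξ ≤ A ^ ρ * weylWeight N ρ m p q ξ := by
  have hp := jb_pos p
  have hq := jb_pos q
  have hξ := jbR_pos ξ
  have hle : (jb p)⁻¹ * (jb q)⁻¹ * jbR ξ ≤ A := by
    rw [← mul_inv, inv_mul_le_iff₀ (by positivity), mul_comm]
    exact h
  have hpow : ((jb p)⁻¹ * (jb q)⁻¹) ^ (N - r) =
      ((jb p)⁻¹ * (jb q)⁻¹) ^ (N - ρ) * ((jb p)⁻¹ * (jb q)⁻¹) ^ (ρ - r) := by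
    rw [← pow_add]
    congr 1
    omega
  have hrpow : jbR ξ ^ (m - r) = jbR ξ ^ (m - ρ) * jbR ξ ^ (ρ - r) := by
    rw [← Real.rpow_natCast, ← Real.rpow_add hξ, Nat.cast_sub hr]
    congr 1
    ring
  calc weylWeight N r m p q ξ
      = ((jb p)⁻¹ * (jb q)⁻¹ * jbR ξ) ^ (ρ - r) * weylWeight N ρ m p q ξ := by
        rw [weylWeight, weylWeight, hpow, hrpow, mul_pow _ (jbR ξ)]
        ring
    _ ≤ A ^ (ρ - r) * weylWeight N ρ m p q ξ := by
        have := weylWeight_pos N ρ m p q ξ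
        gcongr
    _ ≤ _ := by
        have := weylWeight_pos N ρ m p q ξ
        gcongr
        exact Nat.sub_le ρ r

theorem norm_weylJet_le (ha : InSymClass m₁ N a) (hb : InSymClass m₂ N b) (hρ : ρ ≤ N) {A : ℝ}
    (hA : 1 ≤ A) {p q : Zd d} {ξ : Vec d} (h : jbR ξ ≤ A * (jb p * jb q)) :
    ‖weylJet ρ a b p q ξ‖ ≤ ρ * 2 ^ ρ * A ^ ρ * (weylConst d N m₁ m₂ * symNorm m₁ N a *
      symNorm m₂ N b * weylWeight N ρ (m₁ + m₂) p q ξ) := by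
  have hC := weylConst_nonneg d N m₁ m₂
  have hSa := symNorm_nonneg m₁ N a
  have hSb := symNorm_nonneg m₂ N b
  have hξ : Comparable 5 (jbR ξ) (jbR ξ) := by
    have := jbR_pos ξ
    constructor <;> linarith
  have hterm (r : ℕ) (hr : r < ρ) : ‖(1 / (r.factorial : ℝ)) • weylTerm a b p q r ξ ξ‖ ≤
      2 ^ ρ * (weylConst d N m₁ m₂ * symNorm m₁ N a * symNorm m₂ N b *
        (A ^ ρ * weylWeight N ρ (m₁ + m₂) p q ξ)) := by
    have hfact : ‖1 / (r.factorial : ℝ)‖ ≤ 1 := by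
      rw [norm_div, norm_one, Real.norm_natCast]
      exact div_le_one_of_le₀ (mod_cast r.factorial_pos) (by positivity)
    rw [norm_smul]
    refine (mul_le_of_le_one_left (norm_nonneg _) hfact).trans
      ((norm_weylTerm_le ha hb p q hξ hξ (hr.le.trans hρ)).trans ?_)
    have := weylWeight_pos N r (m₁ + m₂) p q ξ
    gcongr
    · norm_num
    · exact weylWeight_le hr.le hρ hA h _
  refine (norm_sum_le_of_le _ fun r hr => hterm r (Finset.mem_range.1 hr)).trans_eq ?_
  rw [Finset.sum_const, Finset.card_range, nsmul_eq_mul]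
  ring

theorem weylBound_nonneg (m₁ m₂ : ℝ) (N ρ : ℕ) (a b : Sym d) (p q : Zd d) (ξ : Vec d) :
    0 ≤ weylConst d N m₁ m₂ * symNorm m₁ N a * symNorm m₂ N b *
      weylWeight N ρ (m₁ + m₂) p q ξ := by
  have := weylConst_nonneg d N m₁ m₂
  have := symNorm_nonneg m₁ N a
  have := symNorm_nonneg m₂ N b
  have := weylWeight_pos N ρ (m₁ + m₂) p q ξ
  positivity

theorem norm_cutFactor_mul_sub_weylJet_le (ha : InSymClass m₁ N a) (hb : InSymClass m₂ N b)
    (hρ : ρ ≤ N) {χ : ℝ → ℝ} (hχ : IsRoughCutoff χ) {ε : ℝ} (hε₀ : 0 < ε) (hε₁ : ε < 1 / 4)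
    (j k l : Zd d) :
    ‖((cutFactor χ ε j k * cutFactor χ ε k l : ℝ) : ℂ) *
        (symCoeff a (j - k) (mid j k) * symCoeff b (k - l) (mid k l) -
          weylJet ρ a b (j - k) (k - l) (mid j l))‖ ≤
      2 ^ ρ * (weylConst d N m₁ m₂ * symNorm m₁ N a * symNorm m₂ N b *
        weylWeight N ρ (m₁ + m₂) (j - k) (k - l) (mid j l)) := by
  have hjk : cutFactor χ ε j k ∈ Set.Icc (0 : ℝ) 1 := hχ.mem _
  have hkl : cutFactor χ ε k l ∈ Set.Icc (0 : ℝ) 1 := hχ.mem _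
  rcases eq_or_ne (cutFactor χ ε j k * cutFactor χ ε k l) 0 with h0 | h0
  · rw [h0, ofReal_zero, zero_mul, norm_zero]
    exact mul_nonneg (by positivity) (weylBound_nonneg ..)
  · obtain ⟨hp, hq⟩ := hχ.rnorm_shift_le hε₀ hε₁ (left_ne_zero_of_mul h0)
      (right_ne_zero_of_mul h0)
    rw [norm_mul, norm_real, Real.norm_of_nonneg (mul_nonneg hjk.1 hkl.1)]
    exact (mul_le_of_le_one_left (norm_nonneg _) (mul_le_one₀ hjk.2 hkl.1 hkl.2)).trans
      (norm_symCoeff_mul_sub_weylJet_le ha hb hρ hp hq)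

theorem norm_cutFactor_sub_mul_weylJet_le (ha : InSymClass m₁ N a) (hb : InSymClass m₂ N b)
    (hρ : ρ ≤ N) {χ : ℝ → ℝ} (hχ : IsRoughCutoff χ) {ε : ℝ} (hε₀ : 0 < ε) (hε₁ : ε < 1 / 4)
    (j k l : Zd d) :
    ‖((cutFactor χ ε j k * cutFactor χ ε k l - cutFactor χ ε j l : ℝ) : ℂ) *
        weylJet ρ a b (j - k) (k - l) (mid j l)‖ ≤
      ρ * 2 ^ ρ * (2 / ε) ^ ρ * (weylConst d N m₁ m₂ * symNorm m₁ N a * symNorm m₂ N b *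
        weylWeight N ρ (m₁ + m₂) (j - k) (k - l) (mid j l)) := by
  have hjk : cutFactor χ ε j k ∈ Set.Icc (0 : ℝ) 1 := hχ.mem _
  have hkl : cutFactor χ ε k l ∈ Set.Icc (0 : ℝ) 1 := hχ.mem _
  have hjl : cutFactor χ ε j l ∈ Set.Icc (0 : ℝ) 1 := hχ.mem _
  rcases eq_or_ne (cutFactor χ ε j k * cutFactor χ ε k l) (cutFactor χ ε j l) with heq | hne
  · rw [heq, sub_self, ofReal_zero, zero_mul, norm_zero]
    exact mul_nonneg (by positivity) (weylBound_nonneg ..)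
  · have habs : |cutFactor χ ε j k * cutFactor χ ε k l - cutFactor χ ε j l| ≤ 1 :=
      abs_le.2 ⟨by linarith [hjl.2, mul_nonneg hjk.1 hkl.1],
        by linarith [hjl.1, mul_le_one₀ hjk.2 hkl.1 hkl.2]⟩
    rw [norm_mul, norm_real, Real.norm_eq_abs]
    exact (mul_le_of_le_one_left (norm_nonneg _) habs).trans
      (norm_weylJet_le ha hb hρ ((one_le_div₀ hε₀).2 (by linarith))
        (hχ.jbR_mid_le_of_cutFactor_mul_ne hε₀ hε₁ hne))

-- Where the cut-offs agree the Taylor remainder is small; where they do not, the shifts are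
-- comparable to the frequency and the decay of the Fourier coefficients wins.
theorem norm_compKernel_le (ha : InSymClass m₁ N a) (hb : InSymClass m₂ N b) (hρ : ρ ≤ N)
    {χ : ℝ → ℝ} (hχ : IsRoughCutoff χ) {ε : ℝ} (hε₀ : 0 < ε) (hε₁ : ε < 1 / 4) (j k l : Zd d) :
    ‖compKernel χ ε ρ a b j k l‖ ≤ (2 ^ ρ + ρ * 2 ^ ρ * (2 / ε) ^ ρ) *
      (weylConst d N m₁ m₂ * symNorm m₁ N a * symNorm m₂ N b *
        weylWeight N ρ (m₁ + m₂) (j - k) (k - l) (mid j l)) := by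
  rw [show compKernel χ ε ρ a b j k l =
      ((cutFactor χ ε j k * cutFactor χ ε k l : ℝ) : ℂ) *
        (symCoeff a (j - k) (mid j k) * symCoeff b (k - l) (mid k l) -
          weylJet ρ a b (j - k) (k - l) (mid j l)) +
      ((cutFactor χ ε j k * cutFactor χ ε k l - cutFactor χ ε j l : ℝ) : ℂ) *
        weylJet ρ a b (j - k) (k - l) (mid j l) by rw [compKernel]; push_cast; ring, add_mul]
  exact norm_add_le_of_le (norm_cutFactor_mul_sub_weylJet_le ha hb hρ hχ hε₀ hε₁ j k l)
    (norm_cutFactor_sub_mul_weylJet_le ha hb hρ hχ hε₀ hε₁ j k l)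

end Bounds

/-- The constant in the `H^s → H^{s - m₁ - m₂ + ρ}` bound for the remainder kernel. -/
def compConst (d N ρ : ℕ) (m₁ m₂ s ε : ℝ) : ℝ :=
  (2 ^ ρ + ρ * 2 ^ ρ * (2 / ε) ^ ρ) * weylConst d N m₁ m₂ *
    (25 ^ |s - m₁ - m₂ + ρ| * 25 ^ |s|)

theorem compConst_nonneg (d N ρ : ℕ) (m₁ m₂ s : ℝ) {ε : ℝ} (hε : 0 < ε) :
    0 ≤ compConst d N ρ m₁ m₂ s ε := by
  have := weylConst_nonneg d N m₁ m₂
  unfold compConst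
  positivity

theorem rpow_jb_mul_weylWeight_le {j l : Zd d} (p q : Zd d) {ξ : Vec d}
    (hj : Comparable 25 (jb j) (jbR ξ)) (hl : Comparable 25 (jb l) (jbR ξ)) (N ρ : ℕ)
    (m s : ℝ) :
    jb j ^ (s - m + ρ) * weylWeight N ρ m p q ξ ≤ 25 ^ |s - m + ρ| * 25 ^ |s| *
      ((jb p)⁻¹ ^ (N - ρ) * (jb q)⁻¹ ^ (N - ρ) * jb l ^ s) := by
  have hξ := jbR_pos ξ
  have hp := jb_pos p
  have hq := jb_pos q
  have hout := hj.rpow_le (by norm_num) (jb_pos j) hξ (s - m + ρ)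
  have hin := hl.symm.rpow_le (by norm_num) hξ (jb_pos l) s
  have hsplit : jbR ξ ^ s = jbR ξ ^ (s - m + ρ) * jbR ξ ^ (m - ρ) := by
    rw [← Real.rpow_add hξ]
    congr 1
    ring
  calc jb j ^ (s - m + ρ) * weylWeight N ρ m p q ξ
      ≤ 25 ^ |s - m + ρ| * jbR ξ ^ (s - m + ρ) * weylWeight N ρ m p q ξ :=
        mul_le_mul_of_nonneg_right hout (weylWeight_pos ..).le
    _ = 25 ^ |s - m + ρ| * ((jb p)⁻¹ ^ (N - ρ) * (jb q)⁻¹ ^ (N - ρ)) * jbR ξ ^ s := by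
        rw [hsplit, weylWeight, mul_pow]
        ring
    _ ≤ 25 ^ |s - m + ρ| * ((jb p)⁻¹ ^ (N - ρ) * (jb q)⁻¹ ^ (N - ρ)) *
        (25 ^ |s| * jb l ^ s) := by gcongr
    _ = _ := by ring

theorem rpow_jb_mul_norm_compKernel_le {a b : Sym d} {m₁ m₂ : ℝ} {N ρ : ℕ}
    (ha : InSymClass m₁ N a) (hb : InSymClass m₂ N b) (hρ : ρ ≤ N) {χ : ℝ → ℝ}
    (hχ : IsRoughCutoff χ) {ε : ℝ} (hε₀ : 0 < ε) (hε₁ : ε < 1 / 4) (s : ℝ) (j k l : Zd d) :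
    jb j ^ (s - m₁ - m₂ + ρ) * ‖compKernel χ ε ρ a b j k l‖ ≤
      compConst d N ρ m₁ m₂ s ε * symNorm m₁ N a * symNorm m₂ N b *
        ((jb (j - k))⁻¹ ^ (N - ρ) * (jb (k - l))⁻¹ ^ (N - ρ) * jb l ^ s) := by
  have hC := weylConst_nonneg d N m₁ m₂
  have hSa := symNorm_nonneg m₁ N a
  have hSb := symNorm_nonneg m₂ N b
  have hj := jb_pos j
  have hl := jb_pos l
  have hjk := jb_pos (j - k)
  have hkl := jb_pos (k - l)
  by_cases h : cutFactor χ ε j k * cutFactor χ ε k l ≠ 0 ∨ cutFactor χ ε j l ≠ 0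
  · obtain ⟨hcj, hcl⟩ := hχ.comparable_jb_mid_of_ne_zero hε₀ hε₁ h
    have hw := rpow_jb_mul_weylWeight_le (j - k) (k - l) hcj hcl N ρ (m₁ + m₂) s
    rw [← sub_sub] at hw
    calc _ ≤ jb j ^ (s - m₁ - m₂ + ρ) * ((2 ^ ρ + ρ * 2 ^ ρ * (2 / ε) ^ ρ) *
          (weylConst d N m₁ m₂ * symNorm m₁ N a * symNorm m₂ N b *
            weylWeight N ρ (m₁ + m₂) (j - k) (k - l) (mid j l))) := by
          gcongr
          exact norm_compKernel_le ha hb hρ hχ hε₀ hε₁ j k l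
      _ = (2 ^ ρ + ρ * 2 ^ ρ * (2 / ε) ^ ρ) * weylConst d N m₁ m₂ * symNorm m₁ N a *
          symNorm m₂ N b * (jb j ^ (s - m₁ - m₂ + ρ) *
            weylWeight N ρ (m₁ + m₂) (j - k) (k - l) (mid j l)) := by ring
      _ ≤ _ := mul_le_mul_of_nonneg_left hw (by positivity)
      _ = _ := by rw [compConst]; ring
  · obtain ⟨hjkl, hjl⟩ := not_or.1 h
    rw [compKernel, not_not.1 hjkl, not_not.1 hjl, ofReal_zero, zero_mul, zero_mul, sub_zero,
      norm_zero, mul_zero]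
    have := compConst_nonneg d N ρ m₁ m₂ s hε₀
    positivity

/-! ### Convolution estimates in Sobolev spaces -/

section Schur

open scoped ENNReal

theorem two_mul_mul_le_sq_add_sq {R : Type*} [CommSemiring R] [LinearOrder R]
    [CanonicallyOrderedAdd R] (x y : R) : 2 * (x * y) ≤ x ^ 2 + y ^ 2 := by
  wlog h : x ≤ y generalizing x y
  · rw [mul_comm x, add_comm]
    exact this y x (le_of_not_ge h)
  obtain ⟨z, rfl⟩ := exists_add_of_le h
  calc 2 * (x * (x + z)) ≤ 2 * (x * (x + z)) + z ^ 2 := le_self_add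
    _ = _ := by ring

variable {ι : Type*}

theorem sq_tsum_mul_le (g u : ι → ℝ≥0∞) :
    (∑' k, g k * u k) ^ 2 ≤ (∑' k, g k) * ∑' k, g k * u k ^ 2 := by
  refine (ENNReal.mul_le_mul_iff_right two_ne_zero ENNReal.ofNat_ne_top).1 ?_
  calc 2 * (∑' k, g k * u k) ^ 2 = ∑' k, ∑' k', g k * g k' * (2 * (u k * u k')) := by
        rw [sq, ← ENNReal.tsum_mul_right, ← ENNReal.tsum_mul_left]
        refine tsum_congr fun k => ?_
        rw [← ENNReal.tsum_mul_left, ← ENNReal.tsum_mul_left]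
        exact tsum_congr fun k' => by ring
    _ ≤ ∑' k, ∑' k', (g k * u k ^ 2 * g k' + g k * (g k' * u k' ^ 2)) := by
        refine ENNReal.tsum_le_tsum fun k => ENNReal.tsum_le_tsum fun k' => ?_
        calc _ ≤ g k * g k' * (u k ^ 2 + u k' ^ 2) := by
              gcongr
              exact two_mul_mul_le_sq_add_sq _ _
          _ = _ := by ring
    _ = _ := by
        simp only [ENNReal.tsum_add, ENNReal.tsum_mul_left, ENNReal.tsum_mul_right]
        ring

variable [AddCommGroup ι]

theorem tsum_sq_convolution_le (g u : ι → ℝ≥0∞) :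
    ∑' j, (∑' k, g (j - k) * u k) ^ 2 ≤ (∑' k, g k) ^ 2 * ∑' k, u k ^ 2 := by
  calc ∑' j, (∑' k, g (j - k) * u k) ^ 2
      ≤ ∑' j, (∑' k, g k) * ∑' k, g (j - k) * u k ^ 2 := by
        refine ENNReal.tsum_le_tsum fun j => ?_
        rw [← (Equiv.subLeft j).tsum_eq g]
        exact sq_tsum_mul_le _ u
    _ = (∑' k, g k) * ∑' k, (∑' j, g (j - k)) * u k ^ 2 := by
        rw [ENNReal.tsum_mul_left, ENNReal.tsum_comm]
        simp only [ENNReal.tsum_mul_right]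
    _ = _ := by
        have hshift (k : ι) : ∑' j, g (j - k) = ∑' k, g k := (Equiv.subRight k).tsum_eq g
        simp only [hshift, ENNReal.tsum_mul_left]
        ring

theorem tsum_sq_convolution_convolution_le (g u : ι → ℝ≥0∞) :
    ∑' j, (∑' l, ∑' k, g (j - k) * g (k - l) * u l) ^ 2 ≤
      (∑' k, g k) ^ 4 * ∑' k, u k ^ 2 := by
  have hassoc (j : ι) : ∑' l, ∑' k, g (j - k) * g (k - l) * u l =
      ∑' k, g (j - k) * ∑' l, g (k - l) * u l := by
    rw [ENNReal.tsum_comm]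
    simp only [mul_assoc, ENNReal.tsum_mul_left]
  simp only [hassoc]
  calc _ ≤ (∑' k, g k) ^ 2 * ∑' k, (∑' l, g (k - l) * u l) ^ 2 := tsum_sq_convolution_le g _
    _ ≤ (∑' k, g k) ^ 2 * ((∑' k, g k) ^ 2 * ∑' k, u k ^ 2) := by
        gcongr
        exact tsum_sq_convolution_le g u
    _ = _ := by ring

/-- The square of the `H^s` norm with values in `[0, ∞]`, so that it needs no summability. -/
def hsENormSq (s : ℝ) (c : Seq d) : ℝ≥0∞ := ∑' n, ENNReal.ofReal (jb n ^ s * ‖c n‖) ^ 2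

theorem ofReal_rpow_jb_mul_sq (s : ℝ) (c : Seq d) (n : Zd d) :
    ENNReal.ofReal (jb n ^ s * ‖c n‖) ^ 2 = ENNReal.ofReal (jb n ^ (2 * s) * ‖c n‖ ^ 2) := by
  have hn := jb_pos n
  rw [← ENNReal.ofReal_pow (by positivity), mul_pow, ← Real.rpow_mul_natCast hn.le, mul_comm s]
  rfl

theorem inHsSeq_iff {s : ℝ} {c : Seq d} : InHsSeq s c ↔ hsENormSq s c ≠ ⊤ := by
  have hnonneg (n : Zd d) : 0 ≤ jb n ^ (2 * s) * ‖c n‖ ^ 2 := by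
    have := jb_pos n
    positivity
  simp only [InHsSeq, hsENormSq, ofReal_rpow_jb_mul_sq]
  exact ⟨Summable.tsum_ofReal_ne_top, fun h => by
    simpa only [ENNReal.toReal_ofReal (hnonneg _)] using ENNReal.summable_toReal h⟩

theorem hsNorm_eq_sqrt_toReal (s : ℝ) (c : Seq d) :
    hsNorm s c = Real.sqrt (hsENormSq s c).toReal := by
  rw [hsNorm, hsNormSq, hsENormSq, ENNReal.tsum_toReal_eq fun n =>
    ENNReal.pow_ne_top ENNReal.ofReal_ne_top]
  refine congrArg _ (tsum_congr fun n => ?_)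
  have := jb_pos n
  rw [ofReal_rpow_jb_mul_sq, ENNReal.toReal_ofReal (by positivity)]

theorem inHsSeq_and_hsNorm_le {s σ A : ℝ} (hA : 0 ≤ A) {c R : Seq d}
    (h : hsENormSq σ R ≤ ENNReal.ofReal A ^ 2 * hsENormSq s c) (hc : InHsSeq s c) :
    InHsSeq σ R ∧ hsNorm σ R ≤ A * hsNorm s c := by
  have hfin := ENNReal.mul_ne_top (ENNReal.pow_ne_top ENNReal.ofReal_ne_top) (inHsSeq_iff.1 hc)
    (a := ENNReal.ofReal A ^ 2)
  refine ⟨inHsSeq_iff.2 (ne_top_of_le_ne_top hfin h), ?_⟩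
  have hreal := Real.sqrt_le_sqrt (ENNReal.toReal_mono hfin h)
  rwa [ENNReal.toReal_mul, ENNReal.toReal_pow, ENNReal.toReal_ofReal hA,
    Real.sqrt_mul (sq_nonneg A), Real.sqrt_sq hA, ← hsNorm_eq_sqrt_toReal,
    ← hsNorm_eq_sqrt_toReal] at hreal

theorem ofReal_rpow_jb_mul_le {s σ A : ℝ} {g : Zd d → ℝ} (hg : ∀ p, 0 ≤ g p)
    {K : Zd d → Zd d → ℂ} {c : Seq d} {j : Zd d} {z : ℂ} (hA : 0 ≤ A)
    (hK : ∀ k l, jb j ^ σ * ‖K k l‖ ≤ A * (g (j - k) * g (k - l) * jb l ^ s))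
    (hz : ‖z‖ₑ ≤ ∑' l, ∑' k, ‖K k l * c l‖ₑ) :
    ENNReal.ofReal (jb j ^ σ * ‖z‖) ≤ ENNReal.ofReal A * ∑' l, ∑' k,
      ENNReal.ofReal (g (j - k)) * ENNReal.ofReal (g (k - l)) *
        ENNReal.ofReal (jb l ^ s * ‖c l‖) := by
  have hj : 0 ≤ jb j ^ σ := Real.rpow_nonneg (jb_pos j).le σ
  rw [ENNReal.ofReal_mul hj, ofReal_norm]
  refine (mul_le_mul_right hz _).trans ?_
  simp only [← ENNReal.tsum_mul_left]
  refine ENNReal.tsum_le_tsum fun l => ENNReal.tsum_le_tsum fun k => ?_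
  rw [← ofReal_norm, ← ENNReal.ofReal_mul hj, ← ENNReal.ofReal_mul (hg _),
    ← ENNReal.ofReal_mul (mul_nonneg (hg _) (hg _)), ← ENNReal.ofReal_mul hA, norm_mul]
  refine ENNReal.ofReal_le_ofReal ?_
  calc jb j ^ σ * (‖K k l‖ * ‖c l‖) = jb j ^ σ * ‖K k l‖ * ‖c l‖ := by ring
    _ ≤ A * (g (j - k) * g (k - l) * jb l ^ s) * ‖c l‖ :=
        mul_le_mul_of_nonneg_right (hK k l) (norm_nonneg _)
    _ = _ := by ring

theorem inHsSeq_and_hsNorm_le_of_kernel {s σ A : ℝ} (hA : 0 ≤ A) {g : Zd d → ℝ}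
    (hg : ∀ p, 0 ≤ g p) (hgs : Summable g) {K : Zd d → Zd d → Zd d → ℂ}
    (hK : ∀ j k l, jb j ^ σ * ‖K j k l‖ ≤ A * (g (j - k) * g (k - l) * jb l ^ s))
    {c R : Seq d} (hR : ∀ j, ‖R j‖ₑ ≤ ∑' l, ∑' k, ‖K j k l * c l‖ₑ) (hc : InHsSeq s c) :
    InHsSeq σ R ∧ hsNorm σ R ≤ A * (∑' p, g p) ^ 2 * hsNorm s c := by
  have hG : 0 ≤ ∑' p, g p := tsum_nonneg hg
  refine inHsSeq_and_hsNorm_le (by positivity) ?_ hc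
  calc hsENormSq σ R
      ≤ ∑' j, (ENNReal.ofReal A * ∑' l, ∑' k, ENNReal.ofReal (g (j - k)) *
          ENNReal.ofReal (g (k - l)) * ENNReal.ofReal (jb l ^ s * ‖c l‖)) ^ 2 :=
        ENNReal.tsum_le_tsum fun j =>
          pow_le_pow_left' (ofReal_rpow_jb_mul_le hg hA (hK j) (hR j)) 2
    _ ≤ ENNReal.ofReal A ^ 2 * ((∑' p, ENNReal.ofReal (g p)) ^ 4 * hsENormSq s c) := by
        simp only [mul_pow, ENNReal.tsum_mul_left]
        gcongr
        exact tsum_sq_convolution_convolution_le (fun p => ENNReal.ofReal (g p)) _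
    _ = _ := by
        rw [← ENNReal.ofReal_tsum_of_nonneg hg hgs, ENNReal.ofReal_mul hA,
          ENNReal.ofReal_pow hG]
        ring

end Schur

/-! ### Fourier coefficients of the symbolic calculus -/

/-- The relation `ŵ(n) = (2π)^{-d/2} ∑ₖ G k` for a continuous function `w`. It is closed under
linear combinations, which carries convolution formulas from products to the symbols of the
calculus. -/
structure HasFourierSum {ι : Type*} (n : Zd d) (w : Fn d) (G : ι → ℂ) : Prop where
  continuous : Continuous w
  hasSum : HasSum (fun k => fourierConst d * G k) (fCoeff w n)

namespace HasFourierSum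

variable {ι τ : Type*} {n : Zd d} {w w' : Fn d} {G G' : ι → ℂ}

theorem add (h : HasFourierSum n w G) (h' : HasFourierSum n w' G') :
    HasFourierSum n (fun x => w x + w' x) (fun k => G k + G' k) where
  continuous := h.continuous.add h'.continuous
  hasSum := by
    simpa only [fCoeff_add h.continuous h'.continuous, mul_add] using h.hasSum.add h'.hasSum

theorem const_mul (z : ℂ) (h : HasFourierSum n w G) :
    HasFourierSum n (fun x => z * w x) (fun k => z * G k) where
  continuous := h.continuous.const_mul z
  hasSum := by simpa only [fCoeff_const_mul, mul_left_comm z] using h.hasSum.mul_left z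

theorem sub (h : HasFourierSum n w G) (h' : HasFourierSum n w' G') :
    HasFourierSum n (fun x => w x - w' x) (fun k => G k - G' k) := by
  simpa [sub_eq_add_neg] using h.add (h'.const_mul (-1))

theorem sum (S : Finset τ) {w : τ → Fn d} {G : τ → ι → ℂ}
    (h : ∀ i ∈ S, HasFourierSum n (w i) (G i)) :
    HasFourierSum n (fun x => ∑ i ∈ S, w i x) (fun k => ∑ i ∈ S, G i k) where
  continuous := continuous_finsetSum S fun i hi => (h i hi).continuous
  hasSum := by
    simpa only [fCoeff_sum S fun i hi => (h i hi).continuous, Finset.mul_sum] using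
      hasSum_sum fun i hi => (h i hi).hasSum

end HasFourierSum

section Coefficients

variable {a b : Sym d} {m₁ m₂ : ℝ} {N : ℕ}

theorem hasFourierSum_mderiv_mul_mderiv (ha : InSymClass m₁ N a) (hb : InSymClass m₂ N b)
    {L L' : List (Fin d ⊕ Fin d)} (hL : L.length ≤ N) (hL' : L'.length + (d + 1) ≤ N)
    (j l : Zd d) (ξ : Vec d) :
    HasFourierSum (j - l) (fun x => mderiv L a x ξ * mderiv L' b x ξ)
      (fun k => symCoeff (mderiv L a) (j - k) ξ * symCoeff (mderiv L' b) (k - l) ξ) := by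
  have hcont {m : ℝ} {e : Sym d} (he : InSymClass m N e) {L : List (Fin d ⊕ Fin d)}
      (hL : L.length ≤ N) : Continuous fun x => mderiv L e x ξ :=
    (contDiff_mderiv he.contDiff (n := 0) hL).continuous.comp (Continuous.prodMk_left ξ)
  have hca := hcont ha hL
  have hcb := hcont hb (L := L') (by omega)
  refine ⟨hca.mul hcb, ?_⟩
  have h := hasSum_fCoeff_mul hca hcb (xPeriodic_mderiv hb.2.1 L' ξ)
    (hb.summable_symCoeff hL' ξ) (j - l)
  rw [← (Equiv.subRight l).hasSum_iff] at h
  refine h.congr_fun fun k => ?_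
  simp only [Function.comp_apply, Equiv.subRight_apply, sub_sub_sub_cancel_right, symCoeff]

theorem symCoeff_pdxi_pdx (hb : ContDiff ℝ 2 (Function.uncurry b)) (hp : XPeriodic b)
    (i k : Fin d) (q : Zd d) (ξ : Vec d) :
    symCoeff (pdxi i (pdx k b)) q ξ = Complex.I * (q k : ℂ) * symCoeff (pdxi i b) q ξ := by
  have hb1 : ContDiff ℝ 1 (Function.uncurry b) := hb.of_le one_le_two
  have hleft := hasDerivAt_symCoeff_line
    (by exact_mod_cast contDiff_pdx (N := 1) (by exact_mod_cast hb) k) q ξ (Pi.single i 1) 0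
  have hright := (hasDerivAt_symCoeff_line hb1 q ξ (Pi.single i 1) 0).const_mul
    (Complex.I * (q k : ℂ))
  simp only [symCoeff_pdx hb1 hp] at hleft
  simpa [Pi.single_apply, apply_ite ((↑) : ℝ → ℂ)] using hleft.unique hright

theorem weylTerm_one_eq_sum_pdxi (a b : Sym d) (p q : Zd d) (ξ η : Vec d) :
    weylTerm a b p q 1 ξ η =
      (∑ i, 1 / 2 * (q i : ℂ) * symCoeff (pdxi i a) p ξ) * symCoeff b q η +
        symCoeff a p ξ * ∑ i, -1 / 2 * (p i : ℂ) * symCoeff (pdxi i b) q η := by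
  simp [weylTerm, leibniz, symCoeffDeriv, mderiv, toVec, Finset.Nat.antidiagonal_succ, add_comm]

theorem weylTerm_two_eq_sum_pdxi (a b : Sym d) (p q : Zd d) (ξ η : Vec d) :
    weylTerm a b p q 2 ξ η =
      (∑ k, 1 / 2 * (q k : ℂ) * ∑ i, 1 / 2 * (q i : ℂ) * symCoeff (pdxi i (pdxi k a)) p ξ) *
          symCoeff b q η +
        2 * ((∑ k, 1 / 2 * (q k : ℂ) * symCoeff (pdxi k a) p ξ) *
          ∑ i, -1 / 2 * (p i : ℂ) * symCoeff (pdxi i b) q η) +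
        symCoeff a p ξ *
          ∑ k, -1 / 2 * (p k : ℂ) * ∑ i, -1 / 2 * (p i : ℂ) * symCoeff (pdxi i (pdxi k b)) q η := by
  simp [weylTerm, leibniz, symCoeffDeriv, mderiv, toVec, Finset.Nat.antidiagonal_succ]
  ring

theorem weylTerm_one_eq_poisson (ha : ContDiff ℝ 1 (Function.uncurry a)) (hpa : XPeriodic a)
    (hb : ContDiff ℝ 1 (Function.uncurry b)) (hpb : XPeriodic b) (p q : Zd d) (ξ η : Vec d) :
    weylTerm a b p q 1 ξ η = 1 / (2 * Complex.I) *
      ∑ i, (symCoeff (pdxi i a) p ξ * symCoeff (pdx i b) q η -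
        symCoeff (pdx i a) p ξ * symCoeff (pdxi i b) q η) := by
  rw [weylTerm_one_eq_sum_pdxi]
  simp only [symCoeff_pdx ha hpa, symCoeff_pdx hb hpb]
  rw [Finset.sum_mul, Finset.mul_sum, Finset.mul_sum, ← Finset.sum_add_distrib]
  refine Finset.sum_congr rfl fun i _ => ?_
  have := Complex.I_ne_zero
  field_simp
  ring

theorem weylTerm_two_eq_sigmaB (ha : ContDiff ℝ 2 (Function.uncurry a)) (hpa : XPeriodic a)
    (hb : ContDiff ℝ 2 (Function.uncurry b)) (hpb : XPeriodic b) (p q : Zd d) (ξ η : Vec d) :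
    weylTerm a b p q 2 ξ η = -(1 / 4) *
      ∑ i, ∑ k, (symCoeff (pdxi i (pdxi k a)) p ξ * symCoeff (pdx i (pdx k b)) q η -
        2 * symCoeff (pdx i (pdxi k a)) p ξ * symCoeff (pdxi i (pdx k b)) q η +
        symCoeff (pdx i (pdx k a)) p ξ * symCoeff (pdxi i (pdxi k b)) q η) := by
  have hpdx {e : Sym d} (he : ContDiff ℝ 2 (Function.uncurry e)) (k : Fin d) :
      ContDiff ℝ 1 (Function.uncurry (pdx k e)) :=
    mod_cast contDiff_pdx (N := 1) (mod_cast he) k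
  have hpdxi (k : Fin d) : ContDiff ℝ 1 (Function.uncurry (pdxi k a)) :=
    mod_cast contDiff_pdxi (N := 1) (mod_cast ha) k
  rw [weylTerm_two_eq_sum_pdxi]
  simp only [symCoeff_pdxi_pdx hb hpb,
    fun k => symCoeff_pdx (hpdx ha k) (xPeriodic_pdx hpa k),
    fun k => symCoeff_pdx (hpdx hb k) (xPeriodic_pdx hpb k),
    fun k => symCoeff_pdx (hpdxi k) (xPeriodic_pdxi hpa k),
    symCoeff_pdx (ha.of_le one_le_two) hpa, symCoeff_pdx (hb.of_le one_le_two) hpb]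
  rw [Finset.sum_comm, Finset.sum_mul_sum]
  simp only [Finset.mul_sum, Finset.sum_mul, ← Finset.sum_add_distrib]
  refine Finset.sum_congr rfl fun k _ => Finset.sum_congr rfl fun i _ => ?_
  ring_nf
  rw [Complex.I_sq]
  ring

theorem hasFourierSum_weylTerm_zero (ha : InSymClass m₁ N a) (hb : InSymClass m₂ N b)
    (hN : d + 1 ≤ N) (j l : Zd d) (ξ : Vec d) :
    HasFourierSum (j - l) (fun x => a x ξ * b x ξ)
      (fun k => weylTerm a b (j - k) (k - l) 0 ξ ξ) := by
  simp only [weylTerm_zero]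
  exact hasFourierSum_mderiv_mul_mderiv ha hb (L := []) (L' := []) N.zero_le (by simpa using hN)
    j l ξ

theorem hasFourierSum_weylTerm_one (ha : InSymClass m₁ N a) (hb : InSymClass m₂ N b)
    (hN : d + 2 ≤ N) (j l : Zd d) (ξ : Vec d) :
    HasFourierSum (j - l) (fun x => 1 / (2 * Complex.I) * poisson a b x ξ)
      (fun k => weylTerm a b (j - k) (k - l) 1 ξ ξ) := by
  have hC1 : ((1 : ℕ) : WithTop ℕ∞) ≤ N := mod_cast (by omega : 1 ≤ N)
  have hconv (u v : Fin d ⊕ Fin d) := hasFourierSum_mderiv_mul_mderiv ha hb (L := [u]) (L' := [v])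
    (by simp; omega) (by simp; omega) j l ξ
  have h := (HasFourierSum.sum Finset.univ fun i _ => (hconv (.inr i) (.inl i)).sub
    (hconv (.inl i) (.inr i))).const_mul (1 / (2 * Complex.I))
  have hterm (k : Zd d) := weylTerm_one_eq_poisson (mod_cast ha.contDiff.of_le hC1) ha.2.1
    (mod_cast hb.contDiff.of_le hC1) hb.2.1 (j - k) (k - l) ξ ξ
  simp only [hterm]
  exact h

theorem hasFourierSum_weylTerm_two (ha : InSymClass m₁ N a) (hb : InSymClass m₂ N b)
    (hN : d + 3 ≤ N) (j l : Zd d) (ξ : Vec d) :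
    HasFourierSum (j - l) (fun x => -(1 / 4) * sigmaB a b x ξ)
      (fun k => weylTerm a b (j - k) (k - l) 2 ξ ξ) := by
  have hC2 : ((2 : ℕ) : WithTop ℕ∞) ≤ N := mod_cast (by omega : 2 ≤ N)
  have hconv (u u' v v' : Fin d ⊕ Fin d) := hasFourierSum_mderiv_mul_mderiv ha hb
    (L := [u, u']) (L' := [v, v']) (by simp; omega) (by simp; omega) j l ξ
  have h := (HasFourierSum.sum Finset.univ fun i _ => HasFourierSum.sum Finset.univ fun k _ =>
    ((hconv (.inr i) (.inr k) (.inl i) (.inl k)).sub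
      ((hconv (.inl i) (.inr k) (.inr i) (.inl k)).const_mul 2)).add
      (hconv (.inl i) (.inl k) (.inr i) (.inr k))).const_mul (-(1 / 4))
  have hterm (k : Zd d) := weylTerm_two_eq_sigmaB (mod_cast ha.contDiff.of_le hC2) ha.2.1
    (mod_cast hb.contDiff.of_le hC2) hb.2.1 (j - k) (k - l) ξ ξ
  simp only [hterm, sigmaB, ← mul_assoc] at h ⊢
  exact h

theorem hasSum_weylJet_three (ha : InSymClass m₁ N a) (hb : InSymClass m₂ N b)
    (hN : d + 3 ≤ N) (j l : Zd d) (ξ : Vec d) :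
    HasSum (fun k => fourierConst d * weylJet 3 a b (j - k) (k - l) ξ)
      (symCoeff (fun x ξ => a x ξ * b x ξ) (j - l) ξ +
        1 / (2 * Complex.I) * symCoeff (poisson a b) (j - l) ξ -
        1 / 8 * symCoeff (sigmaB a b) (j - l) ξ) := by
  have h0 := (hasFourierSum_weylTerm_zero ha hb (by omega) j l ξ).hasSum
  have h1 := (hasFourierSum_weylTerm_one ha hb (by omega) j l ξ).hasSum
  have h2 := ((hasFourierSum_weylTerm_two ha hb hN j l ξ).const_mul (1 / 2)).hasSum
  rw [fCoeff_const_mul] at h1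
  rw [fCoeff_const_mul, fCoeff_const_mul] at h2
  convert (h0.add h1).add h2 using 1
  · ext k
    simp [weylJet, Finset.sum_range_succ]
    ring
  · simp only [symCoeff]
    ring

end Coefficients

/-! ### Composition of paradifferential operators -/

/-- The remainder `R(a,b)` in the composition formula up to second order, as an operator on
Fourier coefficient sequences. -/
def compRemainder (χ : ℝ → ℝ) (ε : ℝ) (a b : Sym d) (c : Seq d) : Seq d := fun j =>
  paraC χ ε a (paraC χ ε b c) j
    - paraC χ ε (fun x ξ => a x ξ * b x ξ) c j
    - 1 / (2 * Complex.I) * paraC χ ε (poisson a b) c j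
    + 1 / 8 * paraC χ ε (sigmaB a b) c j

theorem paraC_eq_sum {χ : ℝ → ℝ} {ε : ℝ} {j : Zd d} {T : Finset (Zd d)}
    (hT : ∀ l ∉ T, cutFactor χ ε j l = 0) (e : Sym d) (c : Seq d) :
    paraC χ ε e c j = fourierConst d * ∑ l ∈ T,
      ((cutFactor χ ε j l : ℝ) : ℂ) * symCoeff e (j - l) (mid j l) * c l := by
  unfold paraC
  rw [tsum_eq_sum (s := T) fun l hl => by simp [hT l hl], fourierConst]

theorem paraC_paraC_eq_sum {χ : ℝ → ℝ} {ε : ℝ} {j : Zd d} {S T : Finset (Zd d)}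
    (hS : ∀ k ∉ S, cutFactor χ ε j k = 0) (hT : ∀ k ∈ S, ∀ l ∉ T, cutFactor χ ε k l = 0)
    (a b : Sym d) (c : Seq d) :
    paraC χ ε a (paraC χ ε b c) j = fourierConst d * ∑ l ∈ T, (∑ k ∈ S, fourierConst d *
      (((cutFactor χ ε j k * cutFactor χ ε k l : ℝ) : ℂ) *
        (symCoeff a (j - k) (mid j k) * symCoeff b (k - l) (mid k l)))) * c l := by
  rw [paraC_eq_sum hS]
  simp only [Finset.sum_mul]
  rw [Finset.sum_comm]
  congr 1
  refine Finset.sum_congr rfl fun k hk => ?_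
  rw [paraC_eq_sum (hT k hk), Finset.mul_sum, Finset.mul_sum]
  refine Finset.sum_congr rfl fun l _ => ?_
  push_cast
  ring

section Remainder

variable {a b : Sym d} {m₁ m₂ : ℝ} {N : ℕ} {χ : ℝ → ℝ} {ε : ℝ}

theorem hasSum_compKernel_three (ha : InSymClass m₁ N a) (hb : InSymClass m₂ N b)
    (hN : d + 3 ≤ N) {j : Zd d} {S : Finset (Zd d)} (hS : ∀ k ∉ S, cutFactor χ ε j k = 0)
    (l : Zd d) :
    HasSum (fun k => fourierConst d * compKernel χ ε 3 a b j k l)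
      ((∑ k ∈ S, fourierConst d * (((cutFactor χ ε j k * cutFactor χ ε k l : ℝ) : ℂ) *
          (symCoeff a (j - k) (mid j k) * symCoeff b (k - l) (mid k l)))) -
        ((cutFactor χ ε j l : ℝ) : ℂ) *
          (symCoeff (fun x ξ => a x ξ * b x ξ) (j - l) (mid j l) +
            1 / (2 * Complex.I) * symCoeff (poisson a b) (j - l) (mid j l) -
            1 / 8 * symCoeff (sigmaB a b) (j - l) (mid j l))) := by
  have hprod : HasSum (fun k => fourierConst d *
      (((cutFactor χ ε j k * cutFactor χ ε k l : ℝ) : ℂ) *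
        (symCoeff a (j - k) (mid j k) * symCoeff b (k - l) (mid k l)))) _ :=
    hasSum_sum_of_ne_finset_zero (s := S) fun k hk => by simp [hS k hk]
  have hjet := (hasSum_weylJet_three ha hb hN j l (mid j l)).mul_left
    ((cutFactor χ ε j l : ℝ) : ℂ)
  refine (hprod.sub hjet).congr_fun fun k => ?_
  rw [compKernel]
  ring

theorem compRemainder_eq_sum (ha : InSymClass m₁ N a) (hb : InSymClass m₂ N b)
    (hN : d + 3 ≤ N) {j : Zd d} {S T : Finset (Zd d)} (hS : ∀ k ∉ S, cutFactor χ ε j k = 0)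
    (hjT : ∀ l ∉ T, cutFactor χ ε j l = 0) (hST : ∀ k ∈ S, ∀ l ∉ T, cutFactor χ ε k l = 0)
    (c : Seq d) :
    compRemainder χ ε a b c j =
      ∑ l ∈ T, ∑' k, fourierConst d ^ 2 * compKernel χ ε 3 a b j k l * c l := by
  have hker (l : Zd d) := (hasSum_compKernel_three ha hb hN hS l).tsum_eq
  calc compRemainder χ ε a b c j
      = fourierConst d * ∑ l ∈ T, (∑' k, fourierConst d * compKernel χ ε 3 a b j k l) * c l := by
        simp only [compRemainder, paraC_paraC_eq_sum hS hST, paraC_eq_sum hjT, hker]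
        simp only [Finset.mul_sum _ _ (fourierConst d), Finset.mul_sum _ _ (1 / (_ : ℂ)),
          ← Finset.sum_sub_distrib, ← Finset.sum_add_distrib]
        exact Finset.sum_congr rfl fun l _ => by ring
    _ = _ := by
        rw [Finset.mul_sum]
        refine Finset.sum_congr rfl fun l _ => ?_
        rw [← tsum_mul_right, ← tsum_mul_left]
        exact tsum_congr fun k => by ring

theorem enorm_compRemainder_le (ha : InSymClass m₁ N a) (hb : InSymClass m₂ N b)
    (hN : d + 3 ≤ N) (hχ : IsRoughCutoff χ) (hε₀ : 0 < ε) (hε₁ : ε < 1 / 4) (c : Seq d)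
    (j : Zd d) :
    ‖compRemainder χ ε a b c j‖ₑ ≤
      ∑' l, ∑' k, ‖fourierConst d ^ 2 * compKernel χ ε 3 a b j k l * c l‖ₑ := by
  classical
  let supp (j : Zd d) : Finset (Zd d) := (hχ.finite_cutFactor_ne_zero hε₀ hε₁ j).toFinset
  have hsupp (j : Zd d) : ∀ k ∉ supp j, cutFactor χ ε j k = 0 := by simp [supp]
  let T := supp j ∪ (supp j).biUnion supp
  have hjT : ∀ l ∉ T, cutFactor χ ε j l = 0 := fun l hl =>
    hsupp j l fun h => hl (Finset.mem_union_left _ h)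
  have hST : ∀ k ∈ supp j, ∀ l ∉ T, cutFactor χ ε k l = 0 := fun k hk l hl =>
    hsupp k l fun h => hl (Finset.mem_union_right _ (Finset.mem_biUnion.2 ⟨k, hk, h⟩))
  rw [compRemainder_eq_sum ha hb hN (hsupp j) hjT hST]
  calc ‖∑ l ∈ T, ∑' k, fourierConst d ^ 2 * compKernel χ ε 3 a b j k l * c l‖ₑ
      ≤ ∑ l ∈ T, ‖∑' k, fourierConst d ^ 2 * compKernel χ ε 3 a b j k l * c l‖ₑ :=
        enorm_sum_le _ _
    _ ≤ ∑ l ∈ T, ∑' k, ‖fourierConst d ^ 2 * compKernel χ ε 3 a b j k l * c l‖ₑ :=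
        Finset.sum_le_sum fun l _ => enorm_tsum_le_tsum_enorm
    _ ≤ _ := ENNReal.sum_le_tsum T

end Remainder

theorem inHsSeq_and_hsNorm_compRemainder_le {a b : Sym d} {m₁ m₂ : ℝ} {N : ℕ}
    (ha : InSymClass m₁ N a) (hb : InSymClass m₂ N b) (hN : d + 3 < N) {χ : ℝ → ℝ}
    (hχ : IsRoughCutoff χ) {ε : ℝ} (hε₀ : 0 < ε) (hε₁ : ε < 1 / 4) {s : ℝ} {c : Seq d}
    (hc : InHsSeq s c) :
    InHsSeq (s - m₁ - m₂ + 3) (compRemainder χ ε a b c) ∧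
      hsNorm (s - m₁ - m₂ + 3) (compRemainder χ ε a b c) ≤
        ‖fourierConst d‖ ^ 2 * compConst d N 3 m₁ m₂ s ε * (∑' p : Zd d, (jb p)⁻¹ ^ (N - 3)) ^ 2 *
          symNorm m₁ N a * symNorm m₂ N b * hsNorm s c := by
  have hC := compConst_nonneg d N 3 m₁ m₂ s hε₀
  have hSa := symNorm_nonneg m₁ N a
  have hSb := symNorm_nonneg m₂ N b
  have hker (j k l : Zd d) :
      jb j ^ (s - m₁ - m₂ + 3) * ‖fourierConst d ^ 2 * compKernel χ ε 3 a b j k l‖ ≤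
        ‖fourierConst d‖ ^ 2 * (compConst d N 3 m₁ m₂ s ε * symNorm m₁ N a * symNorm m₂ N b) *
          ((jb (j - k))⁻¹ ^ (N - 3) * (jb (k - l))⁻¹ ^ (N - 3) * jb l ^ s) := by
    have h := rpow_jb_mul_norm_compKernel_le ha hb (ρ := 3) (by omega) hχ hε₀ hε₁ s j k l
    rw [norm_mul, norm_pow, mul_left_comm, mul_assoc (‖fourierConst d‖ ^ 2)]
    exact mul_le_mul_of_nonneg_left (mod_cast h) (by positivity)
  refine (inHsSeq_and_hsNorm_le_of_kernel (by positivity)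
    (fun p => pow_nonneg (inv_nonneg.2 (jb_pos p).le) _) (summable_inv_jb_pow (by omega)) hker
    (enorm_compRemainder_le ha hb hN.le hχ hε₀ hε₁ c) hc).imp_right fun h => h.trans_eq ?_
  ring

/-- The remainder is shown to lie in the Sobolev class because `hsNorm` is `0` by convention on a
sequence outside it. -/
theorem statement_5_general {N : ℕ} (hN : d + 3 < N) (m₁ m₂ : ℝ) {χ : ℝ → ℝ}
    (hχ : IsRoughCutoff χ) {ε : ℝ} (hε₀ : 0 < ε) (hε₁ : ε < 1 / 4) (s : ℝ) :
    ∃ C > (0 : ℝ), ∀ (a b : Sym d) (c : Seq d),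
      InSymClass m₁ N a → InSymClass m₂ N b → InHsSeq s c →
      InHsSeq (s - m₁ - m₂ + 3) (compRemainder χ ε a b c) ∧
        hsNorm (s - m₁ - m₂ + 3) (compRemainder χ ε a b c) ≤
          C * symNorm m₁ N a * symNorm m₂ N b * hsNorm s c := by
  have hK := compConst_nonneg d N 3 m₁ m₂ s hε₀
  refine ⟨‖fourierConst d‖ ^ 2 * compConst d N 3 m₁ m₂ s ε *
    (∑' p : Zd d, (jb p)⁻¹ ^ (N - 3)) ^ 2 + 1, by positivity, fun a b c ha hb hc => ?_⟩
  have hSa := symNorm_nonneg m₁ N a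
  have hSb := symNorm_nonneg m₂ N b
  have hc0 : 0 ≤ hsNorm s c := Real.sqrt_nonneg _
  refine (inHsSeq_and_hsNorm_compRemainder_le ha hb hN hχ hε₀ hε₁ hc).imp_right fun h =>
    h.trans ?_
  gcongr
  exact le_add_of_nonneg_right zero_le_one

/-- Proposition 2.5(i): symbolic calculus for the composition of two
paradifferential operators:
`T_a ∘ T_b = T_{ab} + (1/2i) T_{{a,b}} - (1/8) T_{σ(a,b)} + R(a,b)` with
`‖R(a,b)h‖_{H^{s-m₁-m₂+3}} ≤ C |a|_{𝒩^{m₁}_{s₀+4}} |b|_{𝒩^{m₂}_{s₀+4}} ‖h‖_{H^s}`.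
The remainder is encoded as the difference of the two sides. -/
theorem statement_5 (d : ℕ) (hd : 1 ≤ d) (s₀ : ℕ) (hs₀ : d < s₀) (m₁ m₂ : ℝ)
    (χ : ℝ → ℝ) (hχ : IsCutoff χ) (ε : ℝ) (hε₀ : 0 < ε) (hε₁ : ε < 1 / 4) (s : ℝ) :
    ∃ C > (0 : ℝ), ∀ (a b : Sym d) (c : Seq d),
      InSymClass m₁ (s₀ + 4) a → InSymClass m₂ (s₀ + 4) b → InHsSeq s c →
      hsNorm (s - m₁ - m₂ + 3)
          (fun j => paraC χ ε a (paraC χ ε b c) j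
            - paraC χ ε (fun x ξ => a x ξ * b x ξ) c j
            - 1 / (2 * Complex.I) * paraC χ ε (poisson a b) c j
            + 1 / 8 * paraC χ ε (sigmaB a b) c j)
        ≤ C * symNorm m₁ (s₀ + 4) a * symNorm m₂ (s₀ + 4) b * hsNorm s c := by
  obtain ⟨C, hC, h⟩ := statement_5_general (d := d) (N := s₀ + 4) (by omega) m₁ m₂
    hχ.isRoughCutoff hε₀ hε₁ s
  exact ⟨C, hC, fun a b c ha hb hc => (h a b c ha hb hc).2⟩

end QLNLS
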